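/- Let Λ ∈ M_n(ℝ) be a nonzero diagonal matrix with tr Λ = 0, let U be a Haar-distributed random matrix in the unitary group U(n), and define A = U Λ U* with entries a_{jk}. Let X ∈ ℝ^d be a random vector whose d coordinates are distinct choices from the collection consisting of the diagonal entries a_{jj}, the quantities √2·Re(a_{jk}) for j < k, and the quantities √2·Im(a_{jk}) for j < k. Let g be a standard Gaussian random vector in ℝ^d. Then W₁( (√(n²−1)/‖Λ‖_HS) · X , g ) ≤ 9 d √n · (‖Λ‖_op² / ‖Λ‖_HS²). -/

import Mathlib

open MeasureTheory ProbabilityTheory Matrix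
open scoped Matrix



/-- Entrywise (Borel product) measurable structure on matrices. -/
instance matrixMeasurableSpace {m n α : Type*} [MeasurableSpace α] :
    MeasurableSpace (Matrix m n α) :=
  inferInstanceAs (MeasurableSpace (m → n → α))

/-- Hilbert–Schmidt norm of a real square matrix. -/
noncomputable def hsNormR {n : ℕ} (M : Matrix (Fin n) (Fin n) ℝ) : ℝ :=
  Real.sqrt ((M * Mᵀ).trace)

/-- Operator (ℓ²→ℓ²) norm of a real square matrix. -/
noncomputable def opNormR {n : ℕ} (M : Matrix (Fin n) (Fin n) ℝ) : ℝ :=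
  ‖Matrix.toEuclideanCLM (𝕜 := ℝ) M‖

/-- Labels for entries of an `n × n` Hermitian matrix: a diagonal entry, the (scaled)
real part of an above-diagonal entry, or the (scaled) imaginary part thereof. -/
def EntryLabel (n : ℕ) : Type :=
  Fin n ⊕ {p : Fin n × Fin n // p.1 < p.2} ⊕ {p : Fin n × Fin n // p.1 < p.2}

/-- The real-valued entry functional corresponding to a label. -/
noncomputable def entryValue {n : ℕ} (M : Matrix (Fin n) (Fin n) ℂ) :
    EntryLabel n → ℝ :=
  Sum.elim (fun j => (M j j).re)
    (Sum.elim (fun p => Real.sqrt 2 * (M p.1.1 p.1.2).re)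
      (fun p => Real.sqrt 2 * (M p.1.1 p.1.2).im))



lemma conv_diff_bound {d : ℕ} {V F : Type*} [NormedAddCommGroup V] [NormedSpace ℝ V]
    [NormedAddCommGroup F] [NormedSpace ℝ F]
    (L : V →L[ℝ] ℝ →L[ℝ] F) (k : (Fin d → ℝ) → V) (hk : Continuous k)
    (hkc : HasCompactSupport k) (f : (Fin d → ℝ) → ℝ) (hf : Continuous f)
    (x y : Fin d → ℝ) (δ : ℝ) (hδ : ∀ t, ‖f (x - t) - f (y - t)‖ ≤ δ) :
    ‖(convolution k f L volume) x - (convolution k f L volume) y‖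
      ≤ ‖L‖ * (∫ t, ‖k t‖) * δ := by
  have hInt : ∀ x, Integrable (fun t => L (k t) (f (x - t))) := by
    intro x
    exact hkc.convolutionExists_left_of_continuous_right (μ := volume) L
      (hk.locallyIntegrable) hf x
  simp only [convolution_def]
  rw [← integral_sub (hInt x) (hInt y)]
  have hki : Integrable (fun t => ‖k t‖) := (hk.integrable_of_hasCompactSupport hkc).norm
  calc _ ≤ ∫ t, ‖L‖ * ‖k t‖ * δ := by
        apply norm_integral_le_of_norm_le
        · exact (hki.const_mul _).mul_const _
        · filter_upwards with t
          rw [← map_sub]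
          refine (L.le_opNorm₂ _ _).trans ?_
          gcongr
          exact hδ t
    _ = _ := by rw [integral_mul_const, integral_const_mul]

lemma conv_diff_bound' {d : ℕ} {V F : Type*} [NormedAddCommGroup V] [NormedSpace ℝ V]
    [NormedAddCommGroup F] [NormedSpace ℝ F]
    (k : (Fin d → ℝ) → V) (hk : Continuous k)
    (hkc : HasCompactSupport k) (f : (Fin d → ℝ) → ℝ) (hf : Continuous f)
    (L : V →L[ℝ] ℝ →L[ℝ] F) :
    ∃ C, ∀ (x y : Fin d → ℝ) (δ : ℝ) (_ : ∀ t, ‖f (x - t) - f (y - t)‖ ≤ δ),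
    ‖(convolution k f L volume) x - (convolution k f L volume) y‖ ≤ C * δ :=
  ⟨_, fun x y δ h => conv_diff_bound L k hk hkc f hf x y δ h⟩

lemma euclid_le {d : ℕ} (x y : Fin d → ℝ) :
    Real.sqrt (∑ i, (x i - y i) ^ 2) ≤ (d + 1) * ‖x - y‖ := by
  apply Real.sqrt_le_iff.2
  refine ⟨by positivity, ?_⟩
  calc ∑ i, (x i - y i) ^ 2 ≤ ∑ i : Fin d, ‖x - y‖ ^ 2 := by
        apply Finset.sum_le_sum
        intro i _
        rw [← sq_abs]
        have := norm_le_pi_norm (x - y) i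
        simp only [Pi.sub_apply, Real.norm_eq_abs] at this
        gcongr
    _ = d * ‖x - y‖ ^ 2 := by simp
    _ ≤ ((d + 1) * ‖x - y‖) ^ 2 := by
        rw [mul_pow]
        gcongr
        nlinarith [(Nat.cast_nonneg d : (0 : ℝ) ≤ d)]

lemma euclid_lip_continuous {d : ℕ} (f : (Fin d → ℝ) → ℝ)
    (hf : ∀ x y : Fin d → ℝ, |f x - f y| ≤ Real.sqrt (∑ i, (x i - y i) ^ 2)) :
    LipschitzWith (d + 1) f := by
  apply LipschitzWith.of_dist_le_mul
  intro x y
  rw [Real.dist_eq, dist_eq_norm]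
  refine (hf x y).trans ((euclid_le x y).trans ?_)
  simp

lemma smoothing {d : ℕ} (f : (Fin d → ℝ) → ℝ)
    (hf : ∀ x y : Fin d → ℝ, |f x - f y| ≤ Real.sqrt (∑ i, (x i - y i) ^ 2))
    (ε : ℝ) (hε : 0 < ε) :
    ∃ h : (Fin d → ℝ) → ℝ, ContDiff ℝ 2 h ∧ (∀ x, |h x - f x| ≤ ε) ∧
      (∀ x y : Fin d → ℝ, |h x - h y| ≤ Real.sqrt (∑ i, (x i - y i) ^ 2)) ∧
      ∃ C, ∀ x y, ‖fderiv ℝ h x - fderiv ℝ h y‖ ≤ C * ‖x - y‖ := by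
  have hfl := euclid_lip_continuous f hf
  have hfc : Continuous f := hfl.continuous
  set η : ℝ := ε / (d + 1) with hη
  have hηp : 0 < η := by positivity
  let φ : ContDiffBump (0 : Fin d → ℝ) := ⟨η / 2, η, by positivity, by linarith⟩
  let k := φ.normed (volume : Measure (Fin d → ℝ))
  have hkc : HasCompactSupport k := φ.hasCompactSupport_normed
  have hk2 : ContDiff ℝ 2 k := φ.contDiff_normed (n := 2)
  have hδ : ∀ x y t, ‖f (x - t) - f (y - t)‖ ≤ Real.sqrt (∑ i, (x i - y i) ^ 2) := by
    intro x y t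
    refine (hf _ _).trans ?_
    simp
  refine ⟨convolution k f (ContinuousLinearMap.lsmul ℝ ℝ) volume, ?_, ?_, ?_, ?_⟩
  · exact hkc.contDiff_convolution_left (n := 2) _ hk2 hfc.locallyIntegrable
  · intro x
    rw [← Real.dist_eq]
    apply ContDiffBump.dist_normed_convolution_le hfc.aestronglyMeasurable
    intro y hy
    refine (hfl.dist_le_mul y x).trans ?_
    have : dist y x < η := hy
    have h2 : ε = (d + 1) * η := by rw [hη]; field_simp
    rw [h2]
    push_cast
    gcongr
  · intro x y
    refine (conv_diff_bound (ContinuousLinearMap.lsmul ℝ ℝ) k hk2.continuous hkc f hfc x y _ (hδ x y)).trans ?_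
    have h1 : ∫ t, ‖k t‖ = 1 := by
      rw [← φ.integral_normed (μ := volume)]
      apply integral_congr_ae
      filter_upwards with t
      rw [Real.norm_of_nonneg (φ.nonneg_normed t)]
    rw [h1, mul_one]
    have := ContinuousLinearMap.opNorm_lsmul_le (𝕜 := ℝ) (R := ℝ) (E := ℝ)
    exact mul_le_of_le_one_left (Real.sqrt_nonneg _) this
  · obtain ⟨C, hC⟩ := conv_diff_bound' (fderiv ℝ k) (hk2.continuous_fderiv (by norm_num))
      (hkc.fderiv ℝ) f hfc (ContinuousLinearMap.precompL (Fin d → ℝ)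
        (ContinuousLinearMap.lsmul ℝ ℝ : ℝ →L[ℝ] ℝ →L[ℝ] ℝ))
    refine ⟨C * (d + 1), fun x y => ?_⟩
    have hD := fun x => (hkc.hasFDerivAt_convolution_left (ContinuousLinearMap.lsmul ℝ ℝ : ℝ →L[ℝ] ℝ →L[ℝ] ℝ)
      (hk2.of_le (by norm_num)) (hfc.locallyIntegrable (μ := volume)) x).fderiv
    rw [hD x, hD y, mul_assoc]
    exact hC x y _ (fun t => (hδ x y t).trans (euclid_le x y))


lemma integrable_gauss_iff (g : ℝ → ℝ) :
    Integrable g (gaussianReal 0 1) ↔ Integrable (fun x => gaussianPDFReal 0 1 x * g x) := by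
  rw [gaussianReal_of_var_ne_zero _ (by norm_num)]
  rw [integrable_withDensity_iff_integrable_smul' (measurable_gaussianPDF 0 1)
    (by filter_upwards with x; exact gaussianPDF_lt_top)]
  simp [toReal_gaussianPDF]

lemma hasDerivAt_gaussPDF (x : ℝ) :
    HasDerivAt (gaussianPDFReal 0 1) (-x * gaussianPDFReal 0 1 x) x := by
  have h : HasDerivAt (fun x : ℝ => (√(2 * Real.pi * ((1 : NNReal) : ℝ)))⁻¹ *
      Real.exp (-(x - 0) ^ 2 / (2 * ((1 : NNReal) : ℝ))))
      ((√(2 * Real.pi * ((1 : NNReal) : ℝ)))⁻¹ *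
      (Real.exp (-(x - 0) ^ 2 / (2 * ((1 : NNReal) : ℝ))) *
        (-(2 * (x - 0) ^ (2 - 1) * 1) / (2 * ((1 : NNReal) : ℝ))))) x := by
    apply HasDerivAt.const_mul
    apply HasDerivAt.exp
    apply HasDerivAt.div_const
    apply HasDerivAt.neg
    exact ((hasDerivAt_id x).sub_const 0).pow 2
  rw [← gaussianPDFReal_def] at h
  convert h using 1
  rw [gaussianPDFReal_def]
  change -x * ((√(2 * Real.pi * ((1 : NNReal) : ℝ)))⁻¹ *
      Real.exp (-(x - 0) ^ 2 / (2 * ((1 : NNReal) : ℝ)))) = _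
  simp
  ring

lemma gauss_ibp_one (u u' : ℝ → ℝ) (C : ℝ) (hu : ∀ x, HasDerivAt u (u' x) x)
    (hC : ∀ x, |u' x| ≤ C) :
    ∫ x, x * u x ∂(gaussianReal 0 1) = ∫ x, u' x ∂(gaussianReal 0 1) := by
  have hu'm : Measurable u' := by
    have : u' = deriv u := by ext x; exact (hu x).deriv.symm
    rw [this]; exact measurable_deriv u
  have huc : Continuous u := continuous_iff_continuousAt.2 fun x => (hu x).continuousAt
  have hi1 : Integrable u' (gaussianReal 0 1) :=
    Integrable.of_bound hu'm.aestronglyMeasurable C (by filter_upwards with x; exact hC x)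
  have hub : ∀ x, |u x| ≤ |u 0| + C * |x| := by
    intro x
    have := Convex.norm_image_sub_le_of_norm_hasDerivWithin_le (f := u) (f' := u')
      (s := Set.univ) (x := 0) (y := x) (C := C)
      (fun x _ => (hu x).hasDerivWithinAt) (fun x _ => hC x) convex_univ trivial trivial
    simp only [Real.norm_eq_abs, sub_zero] at this
    have h3 := abs_sub_abs_le_abs_sub (u x) (u 0)
    linarith
  have m1 : Integrable (fun x : ℝ => |x|) (gaussianReal 0 1) := by
    have := (memLp_id_gaussianReal (μ := 0) (v := 1) 1)
    have h2 : Integrable (id : ℝ → ℝ) (gaussianReal 0 1) :=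
      memLp_one_iff_integrable.1 (by simpa using this)
    exact h2.abs
  have m2 : Integrable (fun x : ℝ => x ^ 2) (gaussianReal 0 1) :=
    (memLp_id_gaussianReal (μ := 0) (v := 1) 2).integrable_sq
  have hi2 : Integrable u (gaussianReal 0 1) := by
    refine Integrable.mono' ((integrable_const |u 0|).add (m1.const_mul C))
      huc.aestronglyMeasurable ?_
    filter_upwards with x
    exact hub x
  have hi3 : Integrable (fun x => x * u x) (gaussianReal 0 1) := by
    refine Integrable.mono' ((m1.mul_const |u 0|).add (m2.const_mul C))
      (continuous_id.mul huc).aestronglyMeasurable ?_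
    filter_upwards with x
    simp only [Real.norm_eq_abs, abs_mul, Pi.add_apply]
    have := mul_le_mul_of_nonneg_left (hub x) (abs_nonneg x)
    have e : |x| * (|u 0| + C * |x|) = |x| * |u 0| + C * x ^ 2 := by
      rw [← sq_abs x]; ring
    linarith
  rw [integrable_gauss_iff] at hi1 hi2 hi3
  rw [integral_gaussianReal_eq_integral_smul (by norm_num),
    integral_gaussianReal_eq_integral_smul (by norm_num)]
  have := integral_mul_deriv_eq_deriv_mul_of_integrable (u := u) (u' := u')
    (v := gaussianPDFReal 0 1) (v' := fun x => -x * gaussianPDFReal 0 1 x)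
    (fun x _ => hu x) (fun x _ => hasDerivAt_gaussPDF x)
    (by convert hi3.neg using 1; ext x; simp; ring)
    (by convert hi1 using 1; ext x; simp; ring)
    (by convert hi2 using 1; ext x; simp; ring)
  simp only [smul_eq_mul]
  have e1 : ∫ x, gaussianPDFReal 0 1 x * (x * u x) = - ∫ x, u x * (-x * gaussianPDFReal 0 1 x) := by
    rw [← integral_neg]
    congr 1; ext x; ring
  rw [e1, this, neg_neg]
  congr 1; ext x; ring

/-- The standard Gaussian measure on `ℝ^d`. -/
noncomputable abbrev gaussPi (d : ℕ) : Measure (Fin d → ℝ) :=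
  Measure.pi fun _ : Fin d => gaussianReal 0 1

lemma gauss_ibp {d : ℕ} (j : Fin d) (u u' : (Fin d → ℝ) → ℝ) (C : ℝ)
    (hu : ∀ z, HasDerivAt (fun t => u (Function.update z j t)) (u' z) (z j))
    (hC : ∀ z, |u' z| ≤ C)
    (hi1 : Integrable (fun z => z j * u z) (gaussPi d)) (hi2 : Integrable u' (gaussPi d)) :
    ∫ z, z j * u z ∂(gaussPi d) = ∫ z, u' z ∂(gaussPi d) := by
  obtain _ | m := d
  · exact j.elim0
  have mp := (measurePreserving_piFinSuccAbove (fun _ : Fin (m + 1) => gaussianReal 0 1) j).symm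
  rw [← mp.integral_comp', ← mp.integral_comp']
  have hi1' := (mp.integrable_comp_emb (MeasurableEquiv.measurableEmbedding _)).2 hi1
  have hi2' := (mp.integrable_comp_emb (MeasurableEquiv.measurableEmbedding _)).2 hi2
  simp only [Function.comp_def] at hi1' hi2'
  rw [integral_prod_symm _ hi1', integral_prod_symm _ hi2']
  congr 1
  ext y
  simp only [MeasurableEquiv.piFinSuccAbove_symm_apply, Fin.insertNthEquiv_apply]
  simp only [Fin.insertNth_apply_same]
  apply gauss_ibp_one _ _ C
  · intro t
    have := hu (Fin.insertNth j t y)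
    rw [Fin.insertNth_apply_same] at this
    simp only [Fin.update_insertNth] at this
    exact this
  · intro t
    exact hC _

lemma memLp_coord {d : ℕ} (j : Fin d) : MemLp (fun z : Fin d → ℝ => z j) 2 (gaussPi d) := by
  have mp := measurePreserving_eval (fun _ : Fin d => gaussianReal 0 1) j
  have h := memLp_id_gaussianReal (μ := 0) (v := 1) 2
  exact MemLp.comp_measurePreserving (by exact_mod_cast h) mp

lemma integrable_coord {d : ℕ} (j : Fin d) : Integrable (fun z : Fin d → ℝ => z j) (gaussPi d) :=
  (memLp_coord j).integrable (by norm_num)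

lemma integrable_coord_mul {d : ℕ} (j k : Fin d) :
    Integrable (fun z : Fin d → ℝ => z j * z k) (gaussPi d) :=
  (memLp_coord j).integrable_mul (memLp_coord k)

lemma integral_coord_mul {d : ℕ} (j k : Fin d) :
    ∫ z, z j * z k ∂(gaussPi d) = if j = k then 1 else 0 := by
  rw [gauss_ibp j (fun z => z k) (fun _ => if j = k then 1 else 0) 1]
  · simp
  · intro z
    by_cases hjk : j = k
    · subst hjk
      simpa using hasDerivAt_id' (z j)
    · simp only [hjk, if_false]
      have : (fun t => Function.update z j t k) = fun _ => z k := by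
        ext t; rw [Function.update_of_ne (Ne.symm hjk)]
      rw [this]
      exact hasDerivAt_const _ _
  · intro z
    split_ifs <;> simp
  · exact integrable_coord_mul j k
  · exact integrable_const _

lemma grad_sq_le {d : ℕ} (h : (Fin d → ℝ) → ℝ) (hd : Differentiable ℝ h)
    (hl : ∀ x y : Fin d → ℝ, |h x - h y| ≤ Real.sqrt (∑ i, (x i - y i) ^ 2)) (x : Fin d → ℝ) :
    ∑ i, (fderiv ℝ h x (Pi.single i 1)) ^ 2 ≤ 1 := by
  set v : Fin d → ℝ := fun i => fderiv ℝ h x (Pi.single i 1) with hv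
  have hsum : fderiv ℝ h x v = ∑ i, v i ^ 2 := by
    have : v = ∑ i, v i • (Pi.single i (1 : ℝ) : Fin d → ℝ) := by
      ext j
      simp [Finset.sum_apply, Pi.single_apply]
    conv_lhs => rw [this]
    rw [map_sum]
    apply Finset.sum_congr rfl
    intro i _
    rw [map_smul, smul_eq_mul, sq]
  have hder : HasDerivAt (fun t : ℝ => h (x + t • v)) (fderiv ℝ h x v) 0 := by
    have h1 : HasDerivAt (fun t : ℝ => x + t • v) v 0 := by
      simpa using ((hasDerivAt_id (0 : ℝ)).smul_const v).const_add x
    have h2 : HasFDerivAt h (fderiv ℝ h x) (x + (0 : ℝ) • v) := by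
      simpa using (hd x).hasFDerivAt
    exact h2.comp_hasDerivAt _ h1
  have hlip : LipschitzWith (Real.toNNReal (Real.sqrt (∑ i, v i ^ 2))) (fun t : ℝ => h (x + t • v)) := by
    apply LipschitzWith.of_dist_le_mul
    intro s t
    rw [Real.dist_eq, Real.dist_eq, Real.coe_toNNReal _ (Real.sqrt_nonneg _)]
    refine (hl _ _).trans ?_
    have : ∑ i, ((x + s • v) i - (x + t • v) i) ^ 2 = (∑ i, v i ^ 2) * (s - t) ^ 2 := by
      rw [Finset.sum_mul]
      apply Finset.sum_congr rfl
      intro i _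
      simp
      ring
    rw [this, Real.sqrt_mul (Finset.sum_nonneg fun i _ => sq_nonneg _), Real.sqrt_sq_eq_abs]
  have := hder.le_of_lipschitz hlip
  rw [hsum, Real.coe_toNNReal _ (Real.sqrt_nonneg _)] at this
  set S := ∑ i, v i ^ 2 with hS
  have hS0 : 0 ≤ S := Finset.sum_nonneg fun i _ => sq_nonneg _
  rw [Real.norm_of_nonneg hS0] at this
  have : S ^ 2 ≤ S := by
    have := (Real.le_sqrt hS0 hS0).1 this
    exact this
  by_contra hc
  push Not at hc
  nlinarith

lemma lin_bound {d : ℕ} (W : Fin d → Fin d → ℝ) (z b : Fin d → ℝ) (hb : ∑ i, b i ^ 2 ≤ 1)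
    (K : ℝ) (hK : 0 < K) :
    |∑ i, ∑ j, W i j * (z j * b i)| ≤ (K + K⁻¹ * ∑ i, (∑ j, W i j * z j) ^ 2) / 2 := by
  have e : ∑ i, ∑ j, W i j * (z j * b i) = ∑ i, (∑ j, W i j * z j) * b i := by
    apply Finset.sum_congr rfl
    intro i _
    rw [Finset.sum_mul]
    apply Finset.sum_congr rfl
    intro j _
    ring
  rw [e]
  calc |∑ i, (∑ j, W i j * z j) * b i| ≤ ∑ i, |(∑ j, W i j * z j) * b i| :=
        Finset.abs_sum_le_sum_abs _ _
    _ ≤ ∑ i, (K * b i ^ 2 + K⁻¹ * (∑ j, W i j * z j) ^ 2) / 2 := by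
        apply Finset.sum_le_sum
        intro i _
        set a := ∑ j, W i j * z j
        rw [abs_mul, ← sq_abs a, ← sq_abs (b i)]
        set A := |a|
        set B := |b i|
        have h := mul_nonneg (inv_nonneg.2 hK.le) (sq_nonneg (K * B - A))
        have : K⁻¹ * (K * B - A) ^ 2 = K * B ^ 2 + K⁻¹ * A ^ 2 - 2 * (A * B) := by
          field_simp
          ring
        linarith
    _ = (K * ∑ i, b i ^ 2 + K⁻¹ * ∑ i, (∑ j, W i j * z j) ^ 2) / 2 := by
        rw [← Finset.sum_div, Finset.sum_add_distrib, Finset.mul_sum, Finset.mul_sum]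
    _ ≤ _ := by
        gcongr
        exact mul_le_of_le_one_right hK.le hb


lemma stein_smooth {d : ℕ} {Ω : Type*} [MeasurableSpace Ω] (P : Measure Ω) [IsProbabilityMeasure P]
    (Y : Ω → Fin d → ℝ) (hY : Measurable Y) (R : ℝ) (hYR : ∀ ω i, |Y ω i| ≤ R)
    (T : Ω → Fin d → Fin d → ℝ) (hT : ∀ i j, Measurable (fun ω => T ω i j))
    (hTR : ∀ ω i j, |T ω i j| ≤ R)
    (hS : ∀ u : (Fin d → ℝ) → ℝ, ContDiff ℝ 1 u → ∀ i,
      ∫ ω, Y ω i * u (Y ω) ∂P = ∑ j, ∫ ω, T ω i j * fderiv ℝ u (Y ω) (Pi.single j 1) ∂P)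
    (K : ℝ) (hK : 0 < K)
    (hKT : ∫ ω, ∑ i, ∑ j, (T ω i j - if i = j then 1 else 0) ^ 2 ∂P ≤ K ^ 2)
    (h : (Fin d → ℝ) → ℝ) (hh : ContDiff ℝ 2 h)
    (hl : ∀ x y : Fin d → ℝ, |h x - h y| ≤ Real.sqrt (∑ i, (x i - y i) ^ 2))
    (C : ℝ) (hC : ∀ x y, ‖fderiv ℝ h x - fderiv ℝ h y‖ ≤ C * ‖x - y‖) :
    |∫ ω, h (Y ω) ∂P - ∫ z, h z ∂(gaussPi d)| ≤ K * (Real.pi / 2) := by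
  set γ := gaussPi d with hγ
  -- derivatives
  set h1 : Fin d → (Fin d → ℝ) → ℝ := fun i x => fderiv ℝ h x (Pi.single i 1) with hh1
  set h2 : Fin d → Fin d → (Fin d → ℝ) → ℝ := fun i j x => fderiv ℝ (h1 i) x (Pi.single j 1) with hh2
  have hd : Differentiable ℝ h := hh.differentiable (by norm_num)
  have hfd : ContDiff ℝ 1 (fderiv ℝ h) := hh.fderiv_right (by norm_num)
  have h1C : ∀ i, ContDiff ℝ 1 (h1 i) := fun i => hfd.clm_apply contDiff_const
  have h1c : ∀ i, Continuous (h1 i) := fun i => (h1C i).continuous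
  have h1m : ∀ i, Measurable (h1 i) := fun i => (h1c i).measurable
  have h2c : ∀ i j, Continuous (h2 i j) := fun i j =>
    ((h1C i).continuous_fderiv (by norm_num)).clm_apply continuous_const
  have h2m : ∀ i j, Measurable (h2 i j) := fun i j => (h2c i j).measurable
  have hgrad : ∀ x, ∑ i, h1 i x ^ 2 ≤ 1 := fun x => grad_sq_le h hd hl x
  have h1b : ∀ i x, |h1 i x| ≤ 1 := by
    intro i x
    rw [← sq_le_one_iff_abs_le_one]
    exact (Finset.single_le_sum (f := fun i => h1 i x ^ 2) (fun i _ => sq_nonneg _)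
      (Finset.mem_univ i)).trans (hgrad x)
  have hR0 : ∀ _ : Fin d, 0 ≤ R := fun i => by
    obtain ⟨ω⟩ : Nonempty Ω := P.nonempty_of_neZero
    exact (abs_nonneg _).trans (hYR ω i)
  have hsingle : ∀ j : Fin d, ‖(Pi.single j 1 : Fin d → ℝ)‖ ≤ 1 := by
    intro j
    rw [pi_norm_le_iff_of_nonneg zero_le_one]
    intro k
    by_cases hjk : k = j
    · subst hjk; simp
    · simp [Pi.single_apply, hjk]
  have h2b : ∀ i j x, |h2 i j x| ≤ C.toNNReal := by
    intro i j x
    have hlip : LipschitzWith C.toNNReal (h1 i) := by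
      apply LipschitzWith.of_dist_le_mul
      intro x y
      rw [dist_eq_norm, dist_eq_norm]
      have e : h1 i x - h1 i y = (fderiv ℝ h x - fderiv ℝ h y) (Pi.single i 1) := by simp [hh1]
      rw [e]
      calc _ ≤ ‖fderiv ℝ h x - fderiv ℝ h y‖ * 1 := by
            refine (ContinuousLinearMap.le_opNorm _ _).trans ?_
            gcongr
            exact hsingle i
        _ ≤ C * ‖x - y‖ := by rw [mul_one]; exact hC x y
        _ ≤ _ := by gcongr; exact Real.le_coe_toNNReal C
    have h3 := norm_fderiv_le_of_lipschitz ℝ (x₀ := x) hlip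
    calc |h2 i j x| ≤ ‖fderiv ℝ (h1 i) x‖ * ‖(Pi.single j 1 : Fin d → ℝ)‖ :=
          (fderiv ℝ (h1 i) x).le_opNorm (Pi.single j 1)
      _ ≤ C.toNNReal * 1 := by
          gcongr
          exact hsingle j
      _ = _ := mul_one _
  -- interpolation
  let v : ℝ → ℝ → Ω × (Fin d → ℝ) → Fin d → ℝ := fun s c p => s • Y p.1 + c • p.2
  have hvm : ∀ s c, Measurable (v s c) := by
    intro s c
    exact ((hY.comp measurable_fst).const_smul s).add (measurable_snd.const_smul c)
  have hYim : ∀ i, Measurable (fun ω => Y ω i) := fun i => (measurable_pi_apply i).comp hY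
  have hzi : ∀ i, Integrable (fun p : Ω × (Fin d → ℝ) => p.2 i) (P.prod γ) := fun i =>
    (integrable_coord i).comp_snd P
  have iY : ∀ s c i, Integrable (fun p : Ω × (Fin d → ℝ) => Y p.1 i * h1 i (v s c p)) (P.prod γ) := by
    intro s c i
    refine Integrable.of_bound (C := R * 1) ?_ ?_
    · exact (((hYim i).comp measurable_fst).mul ((h1m i).comp (hvm s c))).aestronglyMeasurable
    · filter_upwards with p
      rw [Real.norm_eq_abs, abs_mul]
      exact mul_le_mul (hYR _ _) (h1b _ _) (abs_nonneg _) (hR0 i)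
  have iz : ∀ s c i j, Integrable (fun p : Ω × (Fin d → ℝ) => p.2 j * h1 i (v s c p)) (P.prod γ) := by
    intro s c i j
    refine Integrable.mono' (hzi j).abs ?_ ?_
    · exact (((measurable_pi_apply j).comp measurable_snd).mul ((h1m i).comp (hvm s c))).aestronglyMeasurable
    · filter_upwards with p
      rw [Real.norm_eq_abs, abs_mul]
      exact mul_le_of_le_one_right (abs_nonneg _) (h1b _ _)
  have iTz : ∀ s c i j, Integrable (fun p : Ω × (Fin d → ℝ) => T p.1 i j * (p.2 j * h1 i (v s c p)))
      (P.prod γ) := by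
    intro s c i j
    refine (iz s c i j).bdd_mul (c := R) ((hT i j).comp measurable_fst).aestronglyMeasurable ?_
    filter_upwards with p
    exact hTR _ _ _
  have iTh : ∀ s c i j, Integrable (fun p : Ω × (Fin d → ℝ) => T p.1 i j * h2 i j (v s c p))
      (P.prod γ) := by
    intro s c i j
    refine Integrable.of_bound (C := R * C.toNNReal) ?_ ?_
    · exact (((hT i j).comp measurable_fst).mul ((h2m i j).comp (hvm s c))).aestronglyMeasurable
    · filter_upwards with p
      rw [Real.norm_eq_abs, abs_mul]
      exact mul_le_mul (hTR _ _ _) (h2b _ _ _) (abs_nonneg _) (hR0 i)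
  -- integration by parts in the first variable
  have stepA : ∀ s c i, ∫ p, Y p.1 i * h1 i (v s c p) ∂(P.prod γ)
      = s * ∑ j, ∫ p, T p.1 i j * h2 i j (v s c p) ∂(P.prod γ) := by
    intro s c i
    rw [integral_prod_symm _ (iY s c i)]
    have inner : ∀ z, ∫ ω, Y ω i * h1 i (v s c (ω, z)) ∂P
        = ∑ j, s * ∫ ω, T ω i j * h2 i j (v s c (ω, z)) ∂P := by
      intro z
      have hu : ContDiff ℝ 1 (fun y : Fin d → ℝ => h1 i (s • y + c • z)) :=
        (h1C i).comp (by fun_prop)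
      have := hS _ hu i
      rw [this]
      apply Finset.sum_congr rfl
      intro j _
      rw [← integral_const_mul]
      congr 1
      ext ω
      have hder : HasFDerivAt (fun y : Fin d → ℝ => h1 i (s • y + c • z))
          ((fderiv ℝ (h1 i) (s • Y ω + c • z)).comp (s • ContinuousLinearMap.id ℝ (Fin d → ℝ))) (Y ω) := by
        have a1 : HasFDerivAt (fun y : Fin d → ℝ => s • y + c • z)
            (s • ContinuousLinearMap.id ℝ (Fin d → ℝ)) (Y ω) :=
          ((hasFDerivAt_id (Y ω)).const_smul s).add_const _
        have a2 : HasFDerivAt (h1 i) (fderiv ℝ (h1 i) (s • Y ω + c • z)) (s • Y ω + c • z) :=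
          ((h1C i).differentiable (by norm_num) _).hasFDerivAt
        exact a2.comp (Y ω) a1
      rw [hder.fderiv]
      simp only [ContinuousLinearMap.comp_apply, ContinuousLinearMap.smul_apply,
        ContinuousLinearMap.id_apply, map_smul, smul_eq_mul]
      change _ = s * (T ω i j * fderiv ℝ (h1 i) (s • Y ω + c • z) (Pi.single j 1))
      ring
    simp_rw [inner]
    rw [integral_finsetSum, Finset.mul_sum]
    · apply Finset.sum_congr rfl
      intro j _
      rw [integral_const_mul, integral_prod_symm _ (iTh s c i j)]
    · intro j _
      exact ((iTh s c i j).integral_prod_right).const_mul s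
  have stepB : ∀ s c i j, c * ∫ p, T p.1 i j * h2 i j (v s c p) ∂(P.prod γ)
      = ∫ p, T p.1 i j * (p.2 j * h1 i (v s c p)) ∂(P.prod γ) := by
    intro s c i j
    rw [integral_prod _ (iTh s c i j), integral_prod _ (iTz s c i j), ← integral_const_mul]
    congr 1
    ext ω
    simp only [integral_const_mul]
    have hvz : Measurable (fun z : Fin d → ℝ => v s c (ω, z)) :=
      (hvm s c).comp (measurable_const.prodMk measurable_id)
    have := gauss_ibp j (fun z => h1 i (v s c (ω, z))) (fun z => c * h2 i j (v s c (ω, z)))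
      (|c| * C.toNNReal) ?_ ?_ ?_ ?_
    · rw [this, integral_const_mul]; ring
    · intro z
      have a1 : HasDerivAt (fun t => v s c (ω, Function.update z j t)) (c • Pi.single j 1) (z j) := by
        change HasDerivAt (fun t => s • Y ω + c • Function.update z j t) _ _
        exact ((hasDerivAt_update z j (z j)).const_smul c).const_add _
      have a2 : HasFDerivAt (h1 i) (fderiv ℝ (h1 i) (v s c (ω, z)))
          (v s c (ω, Function.update z j (z j))) := by
        rw [Function.update_eq_self]
        exact ((h1C i).differentiable (by norm_num) _).hasFDerivAt
      have a3 := a2.comp_hasDerivAt _ a1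
      rw [map_smul, smul_eq_mul] at a3
      exact a3
    · intro z
      rw [abs_mul]
      exact mul_le_mul_of_nonneg_left (h2b _ _ _) (abs_nonneg _)
    · refine Integrable.mono' (integrable_coord j).abs ?_ ?_
      · exact ((measurable_pi_apply j).mul ((h1m i).comp hvz)).aestronglyMeasurable
      · filter_upwards with p
        rw [Real.norm_eq_abs, abs_mul]
        exact mul_le_of_le_one_right (abs_nonneg _) (h1b _ _)
    · refine Integrable.const_mul (Integrable.of_bound (C := C.toNNReal)
        ((h2m i j).comp hvz).aestronglyMeasurable ?_) c
      filter_upwards with z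
      exact h2b _ _ _
  -- second moment of W z
  set W : Ω → Fin d → Fin d → ℝ := fun ω i j => T ω i j - if i = j then 1 else 0 with hW
  have hWm : ∀ i j, Measurable (fun ω => W ω i j) := fun i j => (hT i j).sub_const _
  have hWb : ∀ ω i j, |W ω i j| ≤ R + 1 := by
    intro ω i j
    refine (abs_sub _ _).trans ?_
    have : |(if i = j then (1 : ℝ) else 0)| ≤ 1 := by split_ifs <;> simp
    linarith [hTR ω i j]
  have iWW : ∀ i j k, Integrable (fun p : Ω × (Fin d → ℝ) => (W p.1 i j * W p.1 i k) * (p.2 j * p.2 k))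
      (P.prod γ) := by
    intro i j k
    refine ((integrable_coord_mul j k).comp_snd P).bdd_mul (c := (R + 1) * (R + 1)) ?_ ?_
    · exact (((hWm i j).comp measurable_fst).mul ((hWm i k).comp measurable_fst)).aestronglyMeasurable
    · filter_upwards with p
      rw [Real.norm_eq_abs, abs_mul]
      exact mul_le_mul (hWb _ _ _) (hWb _ _ _) (abs_nonneg _) (by linarith [hR0 i])
  have sqexp : ∀ p : Ω × (Fin d → ℝ), ∑ i, (∑ j, W p.1 i j * p.2 j) ^ 2
      = ∑ i, ∑ j, ∑ k, (W p.1 i j * W p.1 i k) * (p.2 j * p.2 k) := by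
    intro p
    apply Finset.sum_congr rfl
    intro i _
    rw [sq, Finset.sum_mul_sum]
    apply Finset.sum_congr rfl
    intro j _
    apply Finset.sum_congr rfl
    intro k _
    ring
  have iWz : Integrable (fun p : Ω × (Fin d → ℝ) => ∑ i, (∑ j, W p.1 i j * p.2 j) ^ 2) (P.prod γ) := by
    simp_rw [sqexp]
    exact integrable_finsetSum _ fun i _ => integrable_finsetSum _ fun j _ =>
      integrable_finsetSum _ fun k _ => iWW i j k
  have mWz : ∫ p, ∑ i, (∑ j, W p.1 i j * p.2 j) ^ 2 ∂(P.prod γ) ≤ K ^ 2 := by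
    refine le_trans (le_of_eq ?_) hKT
    rw [integral_prod _ iWz]
    congr 1
    ext ω
    have sqexp' := fun z => sqexp (ω, z)
    simp only at sqexp' ⊢
    simp_rw [sqexp']
    have ii : ∀ i j k, Integrable (fun z : Fin d → ℝ => (W ω i j * W ω i k) * (z j * z k)) γ :=
      fun i j k => (integrable_coord_mul j k).const_mul _
    rw [integral_finsetSum _ fun i _ => integrable_finsetSum _ fun j _ =>
      integrable_finsetSum _ fun k _ => ii i j k]
    apply Finset.sum_congr rfl
    intro i _
    rw [integral_finsetSum _ fun j _ => integrable_finsetSum _ fun k _ => ii i j k]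
    apply Finset.sum_congr rfl
    intro j _
    rw [integral_finsetSum _ fun k _ => ii i j k]
    simp_rw [integral_const_mul]
    rw [Finset.sum_eq_single j]
    · rw [hγ, integral_coord_mul]
      simp [hW, sq]
    · intro k _ hk
      rw [hγ, integral_coord_mul]
      simp [Ne.symm hk]
    · simp
  -- the derivative
  let F : ℝ → ℝ := fun θ => ∫ p, h (v (Real.sin θ) (Real.cos θ) p) ∂(P.prod γ)
  let F' : ℝ → Ω × (Fin d → ℝ) → ℝ := fun θ p => ∑ i, (Real.cos θ * Y p.1 i - Real.sin θ * p.2 i) *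
    h1 i (v (Real.sin θ) (Real.cos θ) p)
  have hF'eq : ∀ θ, ∫ p, F' θ p ∂(P.prod γ) = Real.sin θ *
      ∫ p, ∑ i, ∑ j, W p.1 i j * (p.2 j * h1 i (v (Real.sin θ) (Real.cos θ) p)) ∂(P.prod γ) := by
    intro θ
    set s := Real.sin θ
    set c := Real.cos θ
    have e1 : ∀ i, ∫ p, (c * Y p.1 i - s * p.2 i) * h1 i (v s c p) ∂(P.prod γ)
        = s * (∑ j, ∫ p, T p.1 i j * (p.2 j * h1 i (v s c p)) ∂(P.prod γ)
          - ∫ p, p.2 i * h1 i (v s c p) ∂(P.prod γ)) := by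
      intro i
      have : ∀ p : Ω × (Fin d → ℝ), (c * Y p.1 i - s * p.2 i) * h1 i (v s c p)
        = c * (Y p.1 i * h1 i (v s c p)) - s * (p.2 i * h1 i (v s c p)) := by intro p; ring
      simp_rw [this]
      rw [integral_sub ((iY s c i).const_mul c) ((iz s c i i).const_mul s), integral_const_mul,
        integral_const_mul, stepA, ← mul_assoc, mul_comm c s, mul_assoc, Finset.mul_sum]
      simp_rw [stepB]
      ring
    have e2 : ∀ i (p : Ω × (Fin d → ℝ)), ∑ j, W p.1 i j * (p.2 j * h1 i (v s c p))
        = ∑ j, T p.1 i j * (p.2 j * h1 i (v s c p)) - p.2 i * h1 i (v s c p) := by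
      intro i p
      simp only [hW, sub_mul, Finset.sum_sub_distrib]
      simp
    simp_rw [e2]
    have i1 : ∀ i, Integrable (fun p : Ω × (Fin d → ℝ) => ∑ j, T p.1 i j * (p.2 j * h1 i (v s c p)))
      (P.prod γ) := fun i => integrable_finsetSum _ fun j _ => iTz s c i j
    have i3 : ∀ i, Integrable (fun p : Ω × (Fin d → ℝ) => ∑ j, T p.1 i j * (p.2 j * h1 i (v s c p))
      - p.2 i * h1 i (v s c p)) (P.prod γ) := fun i => (i1 i).sub (iz s c i i)
    rw [integral_finsetSum _ fun i _ => i3 i]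
    rw [integral_finsetSum, Finset.mul_sum]
    · apply Finset.sum_congr rfl
      intro i _
      rw [e1, integral_sub (i1 i) (iz s c i i), integral_finsetSum _ fun j _ => iTz s c i j]
    · intro i _
      have : (fun p : Ω × (Fin d → ℝ) => (c * Y p.1 i - s * p.2 i) * h1 i (v s c p))
        = fun p => c * (Y p.1 i * h1 i (v s c p)) - s * (p.2 i * h1 i (v s c p)) := by
        ext p; ring
      change Integrable (fun p : Ω × (Fin d → ℝ) => (c * Y p.1 i - s * p.2 i) * h1 i (v s c p)) _
      rw [this]
      exact ((iY s c i).const_mul c).sub ((iz s c i i).const_mul s)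
  have hF'b : ∀ θ, ‖∫ p, F' θ p ∂(P.prod γ)‖ ≤ K := by
    intro θ
    rw [hF'eq, norm_mul]
    refine (mul_le_of_le_one_left (norm_nonneg _) (Real.abs_sin_le_one θ)).trans ?_
    calc _ ≤ ∫ p : Ω × (Fin d → ℝ), (K + K⁻¹ * ∑ i, (∑ j, W p.1 i j * p.2 j) ^ 2) / 2 ∂(P.prod γ) := by
          apply norm_integral_le_of_norm_le
          · exact ((integrable_const K).add (iWz.const_mul _)).div_const 2
          · filter_upwards with p
            exact lin_bound (W p.1) p.2 _ (hgrad _) K hK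
      _ = (K + K⁻¹ * ∫ p, ∑ i, (∑ j, W p.1 i j * p.2 j) ^ 2 ∂(P.prod γ)) / 2 := by
          rw [integral_div, integral_add (integrable_const K) (iWz.const_mul _), integral_const_mul]
          simp
      _ ≤ (K + K⁻¹ * K ^ 2) / 2 := by gcongr
      _ = K := by field_simp; ring
  have hLip := (euclid_lip_continuous h hl)
  have hcont : Continuous h := hLip.continuous
  have hderp : ∀ p θ, HasDerivAt (fun θ => h (v (Real.sin θ) (Real.cos θ) p)) (F' θ p) θ := by
    intro p θ
    have a1 : HasDerivAt (fun θ => v (Real.sin θ) (Real.cos θ) p)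
        (Real.cos θ • Y p.1 + (-Real.sin θ) • p.2) θ :=
      ((Real.hasDerivAt_sin θ).smul_const _).add ((Real.hasDerivAt_cos θ).smul_const _)
    have a3 := (hd (v (Real.sin θ) (Real.cos θ) p)).hasFDerivAt.comp_hasDerivAt _ a1
    refine a3.congr_deriv ?_
    set w := Real.cos θ • Y p.1 + (-Real.sin θ) • p.2 with hw
    have : w = ∑ i, w i • (Pi.single i (1 : ℝ) : Fin d → ℝ) := by
      ext j
      simp [Finset.sum_apply, Pi.single_apply]
    conv_lhs => rw [this]
    rw [map_sum]
    apply Finset.sum_congr rfl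
    intro i _
    rw [map_smul, smul_eq_mul]
    congr 1
    simp [hw]
    ring
  have hbint : Integrable (fun p : Ω × (Fin d → ℝ) => ∑ i, (R + |p.2 i|)) (P.prod γ) :=
    integrable_finsetSum _ fun i _ => (integrable_const R).add (hzi i).abs
  have hFm : ∀ θ, AEStronglyMeasurable (fun p => h (v (Real.sin θ) (Real.cos θ) p)) (P.prod γ) :=
    fun θ => (hcont.measurable.comp (hvm _ _)).aestronglyMeasurable
  have hFi : ∀ θ, Integrable (fun p => h (v (Real.sin θ) (Real.cos θ) p)) (P.prod γ) := by
    intro θ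
    refine Integrable.mono' ((integrable_const |h 0|).add (hbint)) (hFm θ) ?_
    filter_upwards with p
    have b1 := hl (v (Real.sin θ) (Real.cos θ) p) 0
    have b2 : Real.sqrt (∑ i, (v (Real.sin θ) (Real.cos θ) p i - (0 : Fin d → ℝ) i) ^ 2) ≤
        ∑ i, |v (Real.sin θ) (Real.cos θ) p i| := by
      rw [Real.sqrt_le_left (Finset.sum_nonneg fun i _ => abs_nonneg _)]
      simp only [Pi.zero_apply, sub_zero]
      calc _ = ∑ i, |v (Real.sin θ) (Real.cos θ) p i| ^ 2 := by simp
        _ ≤ _ := Finset.sum_sq_le_sq_sum_of_nonneg fun i _ => abs_nonneg _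
    have b3 : ∑ i, |v (Real.sin θ) (Real.cos θ) p i| ≤ ∑ i, (R + |p.2 i|) := by
      apply Finset.sum_le_sum
      intro i _
      have : v (Real.sin θ) (Real.cos θ) p i = Real.sin θ * Y p.1 i + Real.cos θ * p.2 i := by
        simp [v]
      rw [this]
      refine (abs_add_le _ _).trans ?_
      rw [abs_mul, abs_mul]
      gcongr
      · exact (mul_le_of_le_one_left (abs_nonneg _) (Real.abs_sin_le_one θ)).trans (hYR _ _)
      · exact mul_le_of_le_one_left (abs_nonneg _) (Real.abs_cos_le_one θ)
    have b4 := abs_sub_abs_le_abs_sub (h (v (Real.sin θ) (Real.cos θ) p)) (h 0)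
    simp only [Real.norm_eq_abs, Pi.add_apply]
    linarith
  have hFder : ∀ θ, HasDerivAt F (∫ p, F' θ p ∂(P.prod γ)) θ := by
    intro θ
    refine (hasDerivAt_integral_of_dominated_loc_of_deriv_le (s := Set.univ)
      (bound := fun p => ∑ i, (R + |p.2 i|)) Filter.univ_mem
      (Filter.Eventually.of_forall hFm) (hFi θ) (F' := F') ?_ ?_ hbint ?_).2
    · apply Measurable.aestronglyMeasurable
      apply Finset.measurable_sum
      intro i _
      exact ((((hYim i).comp measurable_fst).const_mul _).sub
        (((measurable_pi_apply i).comp measurable_snd).const_mul _)).mul ((h1m i).comp (hvm _ _))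
    · filter_upwards with p
      intro θ _
      refine (norm_sum_le _ _).trans ?_
      apply Finset.sum_le_sum
      intro i _
      rw [norm_mul]
      refine (mul_le_of_le_one_right (norm_nonneg _) (h1b _ _)).trans ?_
      refine (norm_sub_le _ _).trans ?_
      simp only [Real.norm_eq_abs, abs_mul]
      gcongr
      · exact (mul_le_of_le_one_left (abs_nonneg _) (Real.abs_cos_le_one θ)).trans (hYR _ _)
      · exact mul_le_of_le_one_left (abs_nonneg _) (Real.abs_sin_le_one θ)
    · filter_upwards with p
      intro θ _
      exact hderp p θ
  have hfin := Convex.norm_image_sub_le_of_norm_hasDerivWithin_le (f := F)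
      (f' := fun θ => ∫ p, F' θ p ∂(P.prod γ))
      (s := Set.univ) (x := 0) (y := Real.pi / 2) (C := K)
      (fun x _ => (hFder x).hasDerivWithinAt) (fun x _ => hF'b x) convex_univ trivial trivial
  have hF1 : F (Real.pi / 2) = ∫ ω, h (Y ω) ∂P := by
    have := hFi (Real.pi / 2)
    simp only [F]
    rw [integral_prod _ this]
    simp [v]
  have hF0 : F 0 = ∫ z, h z ∂γ := by
    have := hFi 0
    simp only [F]
    rw [integral_prod _ this]
    simp [v]
  rw [hF1, hF0, sub_zero, Real.norm_eq_abs, Real.norm_of_nonneg (by positivity)] at hfin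
  exact hfin

lemma stein_abstract {d : ℕ} {Ω : Type*} [MeasurableSpace Ω] (P : Measure Ω) [IsProbabilityMeasure P]
    (Y : Ω → Fin d → ℝ) (hY : Measurable Y) (R : ℝ) (hYR : ∀ ω i, |Y ω i| ≤ R)
    (T : Ω → Fin d → Fin d → ℝ) (hT : ∀ i j, Measurable (fun ω => T ω i j))
    (hTR : ∀ ω i j, |T ω i j| ≤ R)
    (hS : ∀ u : (Fin d → ℝ) → ℝ, ContDiff ℝ 1 u → ∀ i,
      ∫ ω, Y ω i * u (Y ω) ∂P = ∑ j, ∫ ω, T ω i j * fderiv ℝ u (Y ω) (Pi.single j 1) ∂P)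
    (K : ℝ) (hK : 0 < K)
    (hKT : ∫ ω, ∑ i, ∑ j, (T ω i j - if i = j then 1 else 0) ^ 2 ∂P ≤ K ^ 2)
    (f : (Fin d → ℝ) → ℝ)
    (hf : ∀ x y : Fin d → ℝ, |f x - f y| ≤ Real.sqrt (∑ i, (x i - y i) ^ 2)) :
    |∫ ω, f (Y ω) ∂P - ∫ z, f z ∂(gaussPi d)| ≤ K * (Real.pi / 2) := by
  apply le_of_forall_pos_le_add
  intro ε hε
  obtain ⟨h, hh, hhf, hl, C, hC⟩ := smoothing f hf (ε / 2) (by positivity)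
  have main := stein_smooth P Y hY R hYR T hT hTR hS K hK hKT h hh hl C hC
  have hi : ∀ g : (Fin d → ℝ) → ℝ,
      (∀ x y : Fin d → ℝ, |g x - g y| ≤ Real.sqrt (∑ i, (x i - y i) ^ 2)) →
      Integrable (fun ω => g (Y ω)) P ∧ Integrable g (gaussPi d) := by
    intro g hg
    have hgc := (euclid_lip_continuous g hg).continuous
    have hb : ∀ x, ‖g x‖ ≤ |g 0| + ∑ i, |x i| := by
      intro x
      have b1 := hg x 0
      have b2 : Real.sqrt (∑ i, (x i - (0 : Fin d → ℝ) i) ^ 2) ≤ ∑ i, |x i| := by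
        rw [Real.sqrt_le_left (Finset.sum_nonneg fun i _ => abs_nonneg _)]
        simp only [Pi.zero_apply, sub_zero]
        calc _ = ∑ i, |x i| ^ 2 := by simp
          _ ≤ _ := Finset.sum_sq_le_sq_sum_of_nonneg fun i _ => abs_nonneg _
      have b4 := abs_sub_abs_le_abs_sub (g x) (g 0)
      rw [Real.norm_eq_abs]
      linarith
    constructor
    · refine Integrable.of_bound (C := |g 0| + ∑ _i : Fin d, R)
        (hgc.measurable.comp hY).aestronglyMeasurable ?_
      filter_upwards with ω
      refine (hb _).trans ?_
      gcongr with i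
      exact hYR ω i
    · refine Integrable.mono' ((integrable_const |g 0|).add
        (integrable_finsetSum Finset.univ fun i _ => (integrable_coord i).abs))
        hgc.aestronglyMeasurable ?_
      filter_upwards with x
      exact hb x
  obtain ⟨f1, f2⟩ := hi f hf
  obtain ⟨g1, g2⟩ := hi h hl
  have e1 : |∫ ω, h (Y ω) ∂P - ∫ ω, f (Y ω) ∂P| ≤ ε / 2 := by
    rw [← integral_sub g1 f1]
    have := norm_integral_le_of_norm_le_const (μ := P) (f := fun ω => h (Y ω) - f (Y ω)) (C := ε / 2)
      (by filter_upwards with ω; exact hhf _)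
    simpa using this
  have e2 : |∫ z, h z ∂(gaussPi d) - ∫ z, f z ∂(gaussPi d)| ≤ ε / 2 := by
    rw [← integral_sub g2 f2]
    have := norm_integral_le_of_norm_le_const (μ := gaussPi d) (f := fun z => h z - f z) (C := ε / 2)
      (by filter_upwards with ω; exact hhf _)
    simpa using this
  rw [abs_le] at *
  constructor <;> linarith [e1.1, e1.2, e2.1, e2.2, main.1, main.2]


section OnePar
attribute [local instance] Matrix.linftyOpNormedRing Matrix.linftyOpNormedAlgebra

lemma exists_one_par {n : ℕ} (B : Matrix (Fin n) (Fin n) ℂ) (hB : Bᴴ = -B) :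
    ∃ V : ℝ → Matrix (Fin n) (Fin n) ℂ, V 0 = 1 ∧ (∀ s t, V (s + t) = V s * V t) ∧
      (∀ t, V t ∈ Matrix.unitaryGroup (Fin n) ℂ) ∧
      (∀ i j, HasDerivAt (fun t => V t i j) (B i j) 0) := by
  have hadd : ∀ s t : ℝ, NormedSpace.exp ((s + t) • B) = NormedSpace.exp (s • B) * NormedSpace.exp (t • B) := by
    intro s t
    rw [add_smul]
    apply Matrix.exp_add_of_commute
    exact ((Commute.refl B).smul_left s).smul_right t
  have h0 : NormedSpace.exp ((0:ℝ) • B) = 1 := by simp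
  refine ⟨fun t => NormedSpace.exp (t • B), h0, hadd, ?_, ?_⟩
  · intro t
    rw [Matrix.mem_unitaryGroup_iff, star_eq_conjTranspose, ← Matrix.exp_conjTranspose]
    rw [conjTranspose_smul, hB, star_trivial, smul_neg, ← neg_smul, ← hadd, add_neg_cancel, h0]
  · intro i j
    have h := hasDerivAt_exp_smul_const (𝕂 := ℝ) B (0:ℝ)
    rw [zero_smul, NormedSpace.exp_zero, one_mul] at h
    exact hasDerivAt_pi.1 (hasDerivAt_pi.1 h i) j
end OnePar


instance matrixBorelSpace {n : ℕ} : BorelSpace (Matrix (Fin n) (Fin n) ℂ) :=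
  inferInstanceAs (BorelSpace (Fin n → Fin n → ℂ))

lemma isCompact_unitBox (n : ℕ) :
    IsCompact {M : Matrix (Fin n) (Fin n) ℂ | ∀ i j, ‖M i j‖ ≤ 1} := by
  have h : IsCompact (Set.pi Set.univ (fun _ : Fin n => Set.pi Set.univ
      (fun _ : Fin n => Metric.closedBall (0:ℂ) 1))) :=
    isCompact_univ_pi fun _ => isCompact_univ_pi fun _ => isCompact_closedBall _ _
  have he : {M : Matrix (Fin n) (Fin n) ℂ | ∀ i j, ‖M i j‖ ≤ 1} =
      (Set.pi Set.univ (fun _ : Fin n => Set.pi Set.univ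
      (fun _ : Fin n => Metric.closedBall (0:ℂ) 1)) : Set (Fin n → Fin n → ℂ)) := by
    apply Set.ext
    intro M
    constructor
    · intro hM i _ j _
      exact mem_closedBall_zero_iff.2 (hM i j)
    · intro hM i j
      exact mem_closedBall_zero_iff.1 (hM i trivial j trivial)
  rw [he]
  exact h

lemma bounded_on_unitary {n : ℕ} (g : Matrix (Fin n) (Fin n) ℂ → ℂ) (hg : Continuous g) :
    ∃ R : ℝ, ∀ M ∈ Matrix.unitaryGroup (Fin n) ℂ, ‖g M‖ ≤ R := by
  obtain ⟨R, hR⟩ := (isCompact_unitBox n).exists_bound_of_continuousOn hg.continuousOn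
  exact ⟨R, fun M hM => hR M fun i j => entry_norm_bound_of_unitary hM i j⟩

lemma integrable_unitary {n : ℕ} {Ω : Type*} [MeasurableSpace Ω] (P : Measure Ω)
    [IsProbabilityMeasure P]
    (U : Ω → Matrix (Fin n) (Fin n) ℂ) (hUmeas : Measurable U)
    (hUmem : ∀ ω, U ω ∈ Matrix.unitaryGroup (Fin n) ℂ)
    (g : Matrix (Fin n) (Fin n) ℂ → ℂ) (hg : Continuous g) :
    Integrable (fun ω => g (U ω)) P := by
  obtain ⟨R, hR⟩ := bounded_on_unitary g hg
  exact Integrable.of_bound (hg.measurable.comp hUmeas).aestronglyMeasurable R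
    (Filter.Eventually.of_forall fun ω => hR _ (hUmem ω))

lemma haar_deriv {n : ℕ} {Ω : Type*} [MeasurableSpace Ω] (P : Measure Ω)
    [IsProbabilityMeasure P]
    (U : Ω → Matrix (Fin n) (Fin n) ℂ) (hUmeas : Measurable U)
    (hUmem : ∀ ω, U ω ∈ Matrix.unitaryGroup (Fin n) ℂ)
    (hUhaar : ∀ V ∈ Matrix.unitaryGroup (Fin n) ℂ,
      Measure.map (fun ω => V * U ω) P = Measure.map U P)
    (D : Matrix (Fin n) (Fin n) ℂ)
    (V : ℝ → Matrix (Fin n) (Fin n) ℂ) (h0 : V 0 = 1)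
    (hadd : ∀ s t, V (s + t) = V s * V t)
    (hV : ∀ t, V t ∈ Matrix.unitaryGroup (Fin n) ℂ)
    (F F' : Matrix (Fin n) (Fin n) ℂ → ℂ) (hF : Continuous F) (hF' : Continuous F')
    (hder : ∀ A, HasDerivAt (fun t => F (V t * A * (V t)ᴴ)) (F' A) 0) :
    ∫ ω, F' (U ω * D * (U ω)ᴴ) ∂P = 0 := by
  set g : Matrix (Fin n) (Fin n) ℂ → ℂ := fun M => F (M * D * Mᴴ) with hg
  set g' : Matrix (Fin n) (Fin n) ℂ → ℂ := fun M => F' (M * D * Mᴴ) with hg'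
  have hgc : Continuous g := hF.comp (by fun_prop)
  have hgc' : Continuous g' := hF'.comp (by fun_prop)
  have hVU : ∀ t ω, V t * U ω ∈ Matrix.unitaryGroup (Fin n) ℂ := fun t ω =>
    mul_mem (hV t) (hUmem ω)
  have hVc : ∀ t, Continuous (fun M : Matrix (Fin n) (Fin n) ℂ => V t * M) := fun t => by fun_prop
  have hVm : ∀ t, Measurable (fun ω => V t * U ω) := fun t => (hVc t).measurable.comp hUmeas
  have hconst : ∀ t, ∫ ω, g (V t * U ω) ∂P = ∫ ω, g (U ω) ∂P := by
    intro t
    rw [← integral_map (hVm t).aemeasurable hgc.aestronglyMeasurable (f := g), hUhaar _ (hV t),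
      integral_map hUmeas.aemeasurable hgc.aestronglyMeasurable]
  obtain ⟨R, hR⟩ := bounded_on_unitary g' hgc'
  have hd : ∀ t ω, HasDerivAt (fun t => g (V t * U ω)) (g' (V t * U ω)) t := by
    intro t ω
    have h1 := hder ((V t * U ω) * D * (V t * U ω)ᴴ)
    have h2 : (fun s => g (V s * U ω)) =
        fun s => (fun r => F (V r * ((V t * U ω) * D * (V t * U ω)ᴴ) * (V r)ᴴ)) (s - t) := by
      funext s
      have : V s = V (s - t) * V t := by rw [← hadd]; simp
      simp only [hg]
      rw [this]
      simp only [conjTranspose_mul, mul_assoc]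
    rw [h2]
    have h3 : HasDerivAt (fun s : ℝ => s - t) 1 t := (hasDerivAt_id t).sub_const t
    have h4 := HasDerivAt.scomp t (h := fun s : ℝ => s - t)
      (g₁ := fun r => F (V r * ((V t * U ω) * D * (V t * U ω)ᴴ) * (V r)ᴴ)) (by rw [sub_self]; exact h1) h3
    rw [one_smul] at h4
    exact h4
  have key := hasDerivAt_integral_of_dominated_loc_of_deriv_le (μ := P) (x₀ := (0:ℝ)) (s := Set.univ)
    (F := fun t ω => g (V t * U ω)) (F' := fun t ω => g' (V t * U ω)) (bound := fun _ => R)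
    Filter.univ_mem
    (Filter.Eventually.of_forall fun t => (hgc.measurable.comp (hVm t)).aestronglyMeasurable)
    (integrable_unitary P _ (hVm 0) (hVU 0) g hgc)
    (hgc'.measurable.comp (hVm 0)).aestronglyMeasurable
    (Filter.Eventually.of_forall fun ω t _ => hR _ (hVU t ω))
    (integrable_const R)
    (Filter.Eventually.of_forall fun ω t _ => hd t ω)
  have k2 := key.2
  simp only [hconst, h0, one_mul] at k2
  exact k2.unique (hasDerivAt_const _ _)


lemma curve_deriv {n : ℕ} (B A : Matrix (Fin n) (Fin n) ℂ) (hB : Bᴴ = -B)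
    (V : ℝ → Matrix (Fin n) (Fin n) ℂ) (h0 : V 0 = 1)
    (hVd : ∀ i j, HasDerivAt (fun t => V t i j) (B i j) 0) (i j : Fin n) :
    HasDerivAt (fun t => (V t * A * (V t)ᴴ) i j) ((B * A - A * B) i j) 0 := by
  have h1 : ∀ i j, HasDerivAt (fun t => (V t * A) i j) ((B * A) i j) 0 := by
    intro i j
    simp only [Matrix.mul_apply]
    exact HasDerivAt.fun_sum fun k _ => (hVd i k).mul_const _
  have h2 : ∀ i j, HasDerivAt (fun t => (V t)ᴴ i j) ((-B) i j) 0 := by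
    intro i j
    rw [← hB]
    exact (hVd j i).star
  have h3 : HasDerivAt (fun t => ∑ k, (V t * A) i k * (V t)ᴴ k j)
      (∑ k, ((B * A) i k * (V 0)ᴴ k j + (V 0 * A) i k * (-B) k j)) 0 :=
    HasDerivAt.fun_sum fun k _ => (h1 i k).mul (h2 k j)
  have h4 : (B * A - A * B) i j = ∑ k, ((B * A) i k * (V 0)ᴴ k j + (V 0 * A) i k * (-B) k j) := by
    rw [Finset.sum_add_distrib, ← Matrix.mul_apply, ← Matrix.mul_apply, h0]
    simp [sub_eq_add_neg]
  rw [h4]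
  exact h3

lemma ibp_skew {n : ℕ} {Ω : Type*} [MeasurableSpace Ω] (P : Measure Ω)
    [IsProbabilityMeasure P]
    (U : Ω → Matrix (Fin n) (Fin n) ℂ) (hUmeas : Measurable U)
    (hUmem : ∀ ω, U ω ∈ Matrix.unitaryGroup (Fin n) ℂ)
    (hUhaar : ∀ V ∈ Matrix.unitaryGroup (Fin n) ℂ,
      Measure.map (fun ω => V * U ω) P = Measure.map U P)
    (D : Matrix (Fin n) (Fin n) ℂ) (hD : Dᴴ = D)
    (ψ : Matrix (Fin n) (Fin n) ℂ → ℂ) (hψ : Continuous ψ)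
    (ψ' : Matrix (Fin n) (Fin n) ℂ → Matrix (Fin n) (Fin n) ℂ → ℂ)
    (hψ' : Continuous fun p : Matrix (Fin n) (Fin n) ℂ × Matrix (Fin n) (Fin n) ℂ => ψ' p.1 p.2)
    (hder : ∀ (c : ℝ → Matrix (Fin n) (Fin n) ℂ) (C : Matrix (Fin n) (Fin n) ℂ),
      (∀ i j, HasDerivAt (fun t => c t i j) (C i j) 0) →
      HasDerivAt (fun t => ψ (c t)) (ψ' (c 0) C) 0)
    (G : Matrix (Fin n) (Fin n) ℂ → Matrix (Fin n) (Fin n) ℂ)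
    (hG : ∀ A C, Aᴴ = A → Cᴴ = C → ψ' A C = (G A * C).trace)
    (B : Matrix (Fin n) (Fin n) ℂ) (hB : Bᴴ = -B) (a b : Fin n) :
    ∫ ω, (fun A : Matrix (Fin n) (Fin n) ℂ => ψ A * (B * A - A * B) a b +
      A a b * (G A * (B * A - A * B)).trace) (U ω * D * (U ω)ᴴ) ∂P = 0 := by
  obtain ⟨V, h0, hadd, hV, hVd⟩ := exists_one_par B hB
  have h := haar_deriv P U hUmeas hUmem hUhaar D V h0 hadd hV (fun A => ψ A * A a b)
    (fun A => ψ' A (B * A - A * B) * A a b + ψ A * (B * A - A * B) a b)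
    (by fun_prop)
    (by
      have h1 : Continuous fun A => ψ' A (B * A - A * B) :=
        hψ'.comp (f := fun A : Matrix (Fin n) (Fin n) ℂ => (A, B * A - A * B)) (by fun_prop)
      have h2 : Continuous fun A : Matrix (Fin n) (Fin n) ℂ => (B * A - A * B) a b :=
        Continuous.matrix_elem (by fun_prop) a b
      fun_prop)
    (by
      intro A
      have hc := curve_deriv B A hB V h0 hVd
      have h1 := hder (fun t => V t * A * (V t)ᴴ) _ hc
      have h2 := HasDerivAt.fun_mul h1 (hc a b)
      simp only [h0, one_mul, conjTranspose_one, mul_one] at h2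
      exact h2)
  rw [← h]
  congr 1
  funext ω
  simp only
  have hA : (U ω * D * (U ω)ᴴ)ᴴ = U ω * D * (U ω)ᴴ := by
    simp [conjTranspose_mul, hD, mul_assoc]
  set A := U ω * D * (U ω)ᴴ
  rw [hG A (B * A - A * B) hA (by simp [conjTranspose_sub, conjTranspose_mul, hA, hB]; abel)]
  ring

lemma ibp_all {n : ℕ} {Ω : Type*} [MeasurableSpace Ω] (P : Measure Ω)
    [IsProbabilityMeasure P]
    (U : Ω → Matrix (Fin n) (Fin n) ℂ) (hUmeas : Measurable U)
    (hUmem : ∀ ω, U ω ∈ Matrix.unitaryGroup (Fin n) ℂ)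
    (hUhaar : ∀ V ∈ Matrix.unitaryGroup (Fin n) ℂ,
      Measure.map (fun ω => V * U ω) P = Measure.map U P)
    (D : Matrix (Fin n) (Fin n) ℂ) (hD : Dᴴ = D)
    (ψ : Matrix (Fin n) (Fin n) ℂ → ℂ) (hψ : Continuous ψ)
    (ψ' : Matrix (Fin n) (Fin n) ℂ → Matrix (Fin n) (Fin n) ℂ → ℂ)
    (hψ' : Continuous fun p : Matrix (Fin n) (Fin n) ℂ × Matrix (Fin n) (Fin n) ℂ => ψ' p.1 p.2)
    (hder : ∀ (c : ℝ → Matrix (Fin n) (Fin n) ℂ) (C : Matrix (Fin n) (Fin n) ℂ),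
      (∀ i j, HasDerivAt (fun t => c t i j) (C i j) 0) →
      HasDerivAt (fun t => ψ (c t)) (ψ' (c 0) C) 0)
    (G : Matrix (Fin n) (Fin n) ℂ → Matrix (Fin n) (Fin n) ℂ) (hGc : Continuous G)
    (hG : ∀ A C, Aᴴ = A → Cᴴ = C → ψ' A C = (G A * C).trace)
    (B : Matrix (Fin n) (Fin n) ℂ) (a b : Fin n) :
    ∫ ω, (fun A : Matrix (Fin n) (Fin n) ℂ => ψ A * (B * A - A * B) a b +
      A a b * (G A * (B * A - A * B)).trace) (U ω * D * (U ω)ᴴ) ∂P = 0 := by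
  set S : Matrix (Fin n) (Fin n) ℂ := (1 / 2 : ℂ) • (B - Bᴴ) with hS
  set T : Matrix (Fin n) (Fin n) ℂ := (-Complex.I / 2) • (B + Bᴴ) with hT
  have hSs : Sᴴ = -S := by
    rw [hS]; simp [conjTranspose_smul, conjTranspose_sub]
    rw [← smul_neg]; simp
  have hTs : Tᴴ = -T := by
    rw [hT, conjTranspose_smul, conjTranspose_add, conjTranspose_conjTranspose, ← neg_smul,
      add_comm]
    congr 1
    simp; ring
  have hB : B = S + Complex.I • T := by
    rw [hS, hT, smul_smul]
    have : Complex.I * (-Complex.I / 2) = 1 / 2 := by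
      rw [mul_div_assoc', mul_neg, Complex.I_mul_I]; norm_num
    rw [this, ← smul_add]
    have h2 : B - Bᴴ + (B + Bᴴ) = (2:ℂ) • B := by rw [two_smul]; abel
    rw [h2, smul_smul]; norm_num
  clear_value S T
  have hInt : ∀ B : Matrix (Fin n) (Fin n) ℂ,
      Integrable (fun ω => (fun A : Matrix (Fin n) (Fin n) ℂ => ψ A * (B * A - A * B) a b +
      A a b * (G A * (B * A - A * B)).trace) (U ω * D * (U ω)ᴴ)) P := by
    intro B
    apply integrable_unitary P U hUmeas hUmem (fun M => (fun A : Matrix (Fin n) (Fin n) ℂ =>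
      ψ A * (B * A - A * B) a b + A a b * (G A * (B * A - A * B)).trace) (M * D * Mᴴ))
    have h2 : Continuous fun A : Matrix (Fin n) (Fin n) ℂ => (B * A - A * B) a b :=
      Continuous.matrix_elem (by fun_prop) a b
    have h3 : Continuous fun A => (G A * (B * A - A * B)).trace :=
      Continuous.matrix_trace (by fun_prop)
    have h4 : Continuous (fun A : Matrix (Fin n) (Fin n) ℂ =>
      ψ A * (B * A - A * B) a b + A a b * (G A * (B * A - A * B)).trace) := by fun_prop
    exact h4.comp (f := fun M : Matrix (Fin n) (Fin n) ℂ => M * D * Mᴴ) (by fun_prop)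
  have e1 := ibp_skew P U hUmeas hUmem hUhaar D hD ψ hψ ψ' hψ' hder G hG S hSs a b
  have e2 := ibp_skew P U hUmeas hUmem hUhaar D hD ψ hψ ψ' hψ' hder G hG T hTs a b
  have e3 : ∀ ω, (fun A : Matrix (Fin n) (Fin n) ℂ => ψ A * (B * A - A * B) a b +
      A a b * (G A * (B * A - A * B)).trace) (U ω * D * (U ω)ᴴ) =
      (fun A : Matrix (Fin n) (Fin n) ℂ => ψ A * (S * A - A * S) a b +
      A a b * (G A * (S * A - A * S)).trace) (U ω * D * (U ω)ᴴ) +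
      Complex.I * (fun A : Matrix (Fin n) (Fin n) ℂ => ψ A * (T * A - A * T) a b +
      A a b * (G A * (T * A - A * T)).trace) (U ω * D * (U ω)ᴴ) := by
    intro ω
    simp only
    set A := U ω * D * (U ω)ᴴ
    have e : B * A - A * B = (S * A - A * S) + Complex.I • (T * A - A * T) := by
      rw [hB, add_mul, mul_add, Matrix.smul_mul, Matrix.mul_smul, smul_sub]; abel
    rw [e, mul_add, trace_add, Matrix.mul_smul, trace_smul]
    simp only [Matrix.add_apply, Matrix.smul_apply, smul_eq_mul]
    ring
  simp_rw [e3]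
  rw [integral_add (hInt S) ((hInt T).const_mul _), integral_const_mul, e1, e2]
  simp


/-- Complex matrix unit. -/
noncomputable def sg {n : ℕ} (j p : Fin n) : Matrix (Fin n) (Fin n) ℂ := Matrix.single j p 1

lemma sg_apply {n : ℕ} (j p a b : Fin n) : sg j p a b = if j = a ∧ p = b then 1 else 0 := by
  simp [sg, Matrix.single]

lemma tr_mul_sg {n : ℕ} (M : Matrix (Fin n) (Fin n) ℂ) (j p : Fin n) :
    (M * (sg j p)).trace = M p j := by
  simp [Matrix.trace, Matrix.mul_apply, sg_apply, Finset.sum_ite_eq, ite_and]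

lemma tr_sg_mul {n : ℕ} (M : Matrix (Fin n) (Fin n) ℂ) (j p : Fin n) :
    ((sg j p) * M).trace = M p j := by
  rw [Matrix.trace_mul_comm, tr_mul_sg]

lemma key_pointwise {n : ℕ} (A G : Matrix (Fin n) (Fin n) ℂ) (x : ℂ) (p q : Fin n) :
    ∑ j, (x * ((sg j p) * A - A * (sg j p)) j q +
      A j q * (G * ((sg j p) * A - A * (sg j p))).trace) =
    n * (x * A p q) - (if p = q then A.trace else 0) * x - ((G * A - A * G) * A) p q := by
  have h1 : ∀ j, ((sg j p) * A - A * (sg j p)) j q =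
      A p q - if p = q then A j j else 0 := by
    intro j
    simp [Matrix.mul_apply, sg_apply, ite_and]
  have h2 : ∀ j, (G * ((sg j p) * A - A * (sg j p))).trace =
      (A * G - G * A) p j := by
    intro j
    rw [mul_sub, trace_sub, ← mul_assoc, ← mul_assoc, Matrix.trace_mul_comm (G * _), ← mul_assoc,
      tr_mul_sg, tr_mul_sg, Matrix.sub_apply]
  simp_rw [h1, h2]
  rw [Finset.sum_add_distrib]
  have h3 : ∑ j, A j q * (A * G - G * A) p j = - ((G * A - A * G) * A) p q := by
    rw [← Matrix.neg_apply, ← neg_mul, neg_sub, Matrix.mul_apply]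
    simp_rw [mul_comm]
  rw [h3]
  simp only [mul_sub, Finset.sum_sub_distrib, Finset.sum_const, Finset.card_univ, Fintype.card_fin,
    ← Finset.mul_sum, Matrix.trace, Matrix.diag, nsmul_eq_mul]
  split_ifs with h
  · ring
  · simp only [Finset.sum_const_zero]
    ring

lemma ibp_key {n : ℕ} {Ω : Type*} [MeasurableSpace Ω] (P : Measure Ω)
    [IsProbabilityMeasure P]
    (U : Ω → Matrix (Fin n) (Fin n) ℂ) (hUmeas : Measurable U)
    (hUmem : ∀ ω, U ω ∈ Matrix.unitaryGroup (Fin n) ℂ)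
    (hUhaar : ∀ V ∈ Matrix.unitaryGroup (Fin n) ℂ,
      Measure.map (fun ω => V * U ω) P = Measure.map U P)
    (D : Matrix (Fin n) (Fin n) ℂ) (hD : Dᴴ = D)
    (ψ : Matrix (Fin n) (Fin n) ℂ → ℂ) (hψ : Continuous ψ)
    (ψ' : Matrix (Fin n) (Fin n) ℂ → Matrix (Fin n) (Fin n) ℂ → ℂ)
    (hψ' : Continuous fun p : Matrix (Fin n) (Fin n) ℂ × Matrix (Fin n) (Fin n) ℂ => ψ' p.1 p.2)
    (hder : ∀ (c : ℝ → Matrix (Fin n) (Fin n) ℂ) (C : Matrix (Fin n) (Fin n) ℂ),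
      (∀ i j, HasDerivAt (fun t => c t i j) (C i j) 0) →
      HasDerivAt (fun t => ψ (c t)) (ψ' (c 0) C) 0)
    (G : Matrix (Fin n) (Fin n) ℂ → Matrix (Fin n) (Fin n) ℂ) (hGc : Continuous G)
    (hG : ∀ A C, Aᴴ = A → Cᴴ = C → ψ' A C = (G A * C).trace)
    (p q : Fin n) :
    n * ∫ ω, ψ (U ω * D * (U ω)ᴴ) * (U ω * D * (U ω)ᴴ) p q ∂P =
      (if p = q then D.trace else 0) * ∫ ω, ψ (U ω * D * (U ω)ᴴ) ∂P +
      ∫ ω, (fun A : Matrix (Fin n) (Fin n) ℂ => ((G A * A - A * G A) * A) p q)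
        (U ω * D * (U ω)ᴴ) ∂P := by
  have hInt : ∀ g : Matrix (Fin n) (Fin n) ℂ → ℂ, Continuous g →
      Integrable (fun ω => g (U ω * D * (U ω)ᴴ)) P := fun g hg =>
    integrable_unitary P U hUmeas hUmem (fun M => g (M * D * Mᴴ)) (hg.comp (by fun_prop))
  have hj := fun j => ibp_all P U hUmeas hUmem hUhaar D hD ψ hψ ψ' hψ' hder G hGc hG
    (sg j p) j q
  have hjc : ∀ j, Continuous (fun A : Matrix (Fin n) (Fin n) ℂ =>
      ψ A * ((sg j p) * A - A * (sg j p)) j q +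
      A j q * (G A * ((sg j p) * A - A * (sg j p))).trace) := by
    intro j
    have h2 : Continuous fun A : Matrix (Fin n) (Fin n) ℂ =>
        ((sg j p) * A - A * (sg j p)) j q :=
      Continuous.matrix_elem (by fun_prop) j q
    have h3 : Continuous fun A => (G A * ((sg j p) * A - A * (sg j p))).trace :=
      Continuous.matrix_trace (by fun_prop)
    fun_prop
  have hsum := integral_finsetSum (μ := P) Finset.univ (fun j _ => hInt _ (hjc j))
  simp only [hj, Finset.sum_const_zero] at hsum
  have htr : ∀ ω, (U ω * D * (U ω)ᴴ).trace = D.trace := by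
    intro ω
    rw [Matrix.trace_mul_comm, ← mul_assoc, ← star_eq_conjTranspose,
      (Matrix.mem_unitaryGroup_iff'.1 (hUmem ω)), one_mul]
  simp only [key_pointwise, htr] at hsum
  have hc3 : Continuous (fun A : Matrix (Fin n) (Fin n) ℂ => ((G A * A - A * G A) * A) p q) :=
    Continuous.matrix_elem (by fun_prop) p q
  have i1 := (hInt (fun A => ψ A * A p q) (by fun_prop)).const_mul (n : ℂ)
  have i2 := (hInt ψ hψ).const_mul (if p = q then D.trace else 0)
  have i3 := hInt _ hc3
  have e := integral_sub (i1.sub i2) i3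
  simp only [Pi.sub_apply] at e
  rw [e, integral_sub i1 i2, integral_const_mul, integral_const_mul] at hsum
  linear_combination hsum


lemma haar_mean {n : ℕ} {Ω : Type*} [MeasurableSpace Ω] (P : Measure Ω)
    [IsProbabilityMeasure P]
    (U : Ω → Matrix (Fin n) (Fin n) ℂ) (hUmeas : Measurable U)
    (hUmem : ∀ ω, U ω ∈ Matrix.unitaryGroup (Fin n) ℂ)
    (hUhaar : ∀ V ∈ Matrix.unitaryGroup (Fin n) ℂ,
      Measure.map (fun ω => V * U ω) P = Measure.map U P)
    (D : Matrix (Fin n) (Fin n) ℂ) (hD : Dᴴ = D) (p q : Fin n) :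
    n * ∫ ω, (U ω * D * (U ω)ᴴ) p q ∂P = if p = q then D.trace else 0 := by
  have h := ibp_key P U hUmeas hUmem hUhaar D hD (fun _ => 1) continuous_const (fun _ _ => 0)
    continuous_const (fun c C _ => hasDerivAt_const _ _) (fun _ => 0) continuous_const
    (by simp) p q
  simpa using h

lemma haar_cov_aux {n : ℕ} {Ω : Type*} [MeasurableSpace Ω] (P : Measure Ω)
    [IsProbabilityMeasure P]
    (U : Ω → Matrix (Fin n) (Fin n) ℂ) (hUmeas : Measurable U)
    (hUmem : ∀ ω, U ω ∈ Matrix.unitaryGroup (Fin n) ℂ)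
    (hUhaar : ∀ V ∈ Matrix.unitaryGroup (Fin n) ℂ,
      Measure.map (fun ω => V * U ω) P = Measure.map U P)
    (D : Matrix (Fin n) (Fin n) ℂ) (hD : Dᴴ = D) (hDtr : D.trace = 0) (r s p q : Fin n) :
    n * ∫ ω, (U ω * D * (U ω)ᴴ) r s * (U ω * D * (U ω)ᴴ) p q ∂P =
      (if s = p then 1 else 0) * ∫ ω, (U ω * (D * D) * (U ω)ᴴ) r q ∂P
      - ∫ ω, (U ω * D * (U ω)ᴴ) p s * (U ω * D * (U ω)ᴴ) r q ∂P := by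
  have h := ibp_key P U hUmeas hUmem hUhaar D hD (fun A => A r s) (by fun_prop) (fun _ C => C r s)
    (by fun_prop) (fun c C hc => hc r s) (fun _ => sg s r) continuous_const
    (fun A C _ _ => (tr_sg_mul C s r).symm) p q
  rw [hDtr, ite_self, zero_mul, zero_add] at h
  rw [h]
  have hsq : ∀ ω, U ω * (D * D) * (U ω)ᴴ = (U ω * D * (U ω)ᴴ) * (U ω * D * (U ω)ᴴ) := by
    intro ω
    have : (U ω)ᴴ * U ω = 1 := by
      rw [← star_eq_conjTranspose]; exact Matrix.mem_unitaryGroup_iff'.1 (hUmem ω)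
    calc U ω * (D * D) * (U ω)ᴴ = U ω * D * 1 * D * (U ω)ᴴ := by simp only [mul_one, mul_assoc]
      _ = _ := by rw [← this]; simp only [mul_assoc]
  have hpt : ∀ A : Matrix (Fin n) (Fin n) ℂ, ((sg s r * A - A * sg s r) * A) p q =
      (if s = p then 1 else 0) * (A * A) r q - A p s * A r q := by
    intro A
    rw [sub_mul, Matrix.sub_apply, mul_assoc, Matrix.mul_apply (M := sg s r),
      Matrix.mul_apply (M := A * sg s r)]
    congr 1
    · simp [sg_apply, ite_and]
    · simp [sg_apply, ite_and, Matrix.mul_apply]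
  simp only [hpt, hsq]
  have hInt : ∀ g : Matrix (Fin n) (Fin n) ℂ → ℂ, Continuous g →
      Integrable (fun ω => g (U ω * D * (U ω)ᴴ)) P := fun g hg =>
    integrable_unitary P U hUmeas hUmem (fun M => g (M * D * Mᴴ)) (hg.comp (by fun_prop))
  have i1 := hInt (fun A => (A * A) r q) (Continuous.matrix_elem (by fun_prop) r q)
  have i2 := hInt (fun A => A p s * A r q) (by fun_prop)
  rw [integral_sub (i1.const_mul _) i2, integral_const_mul]

lemma haar_second {n : ℕ} {Ω : Type*} [MeasurableSpace Ω] (P : Measure Ω)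
    [IsProbabilityMeasure P]
    (U : Ω → Matrix (Fin n) (Fin n) ℂ) (hUmeas : Measurable U)
    (hUmem : ∀ ω, U ω ∈ Matrix.unitaryGroup (Fin n) ℂ)
    (hUhaar : ∀ V ∈ Matrix.unitaryGroup (Fin n) ℂ,
      Measure.map (fun ω => V * U ω) P = Measure.map U P)
    (D : Matrix (Fin n) (Fin n) ℂ) (hD : Dᴴ = D) (hDtr : D.trace = 0)
    (S : ℝ) (hS : (D * D).trace = S) (hS0 : 0 ≤ S) (r s : Fin n) :
    ((n:ℝ) ^ 2 - 1) * ∫ ω, ‖(U ω * D * (U ω)ᴴ) r s‖ ^ 2 ∂P ≤ S := by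
  have hn : 0 < (n:ℝ) := by
    have := r.pos
    exact_mod_cast this
  have h1 := haar_cov_aux P U hUmeas hUmem hUhaar D hD hDtr r s s r
  have h2 := haar_cov_aux P U hUmeas hUmem hUhaar D hD hDtr s s r r
  have m1 := haar_mean P U hUmeas hUmem hUhaar (D * D) (by rw [conjTranspose_mul, hD]) r r
  have m2 := haar_mean P U hUmeas hUmem hUhaar (D * D) (by rw [conjTranspose_mul, hD]) s r
  have hc : ∀ ω, (U ω * D * (U ω)ᴴ) r s * (U ω * D * (U ω)ᴴ) s r =
      ((‖(U ω * D * (U ω)ᴴ) r s‖ ^ 2 : ℝ) : ℂ) := by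
    intro ω
    have hA : (U ω * D * (U ω)ᴴ)ᴴ = U ω * D * (U ω)ᴴ := by
      simp [conjTranspose_mul, hD, mul_assoc]
    set A := U ω * D * (U ω)ᴴ
    have : A s r = star (A r s) := by
      conv_lhs => rw [← hA]
      rfl
    rw [this, Complex.star_def, Complex.mul_conj, Complex.normSq_eq_norm_sq]
  have hcomm : ∫ ω, (U ω * D * (U ω)ᴴ) s s * (U ω * D * (U ω)ᴴ) r r ∂P =
      ∫ ω, (U ω * D * (U ω)ᴴ) r r * (U ω * D * (U ω)ᴴ) s s ∂P := by simp_rw [mul_comm]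
  simp only [hc] at h1 h2
  rw [integral_complex_ofReal] at h1 h2
  set x := ∫ ω, ‖(U ω * D * (U ω)ᴴ) r s‖ ^ 2 ∂P
  set c2 := ∫ ω, (U ω * D * (U ω)ᴴ) s s * (U ω * D * (U ω)ᴴ) r r ∂P
  set y1 := ∫ ω, (U ω * (D * D) * (U ω)ᴴ) r r ∂P
  set y2 := ∫ ω, (U ω * (D * D) * (U ω)ᴴ) s r ∂P
  rw [if_pos rfl, hS] at m1
  simp only [if_true, one_mul] at h1
  by_cases hsr : s = r
  · rw [if_pos hsr, hS] at m2
    rw [if_pos hsr, one_mul] at h2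
    have h3 : (((n:ℝ) * (((n:ℝ) ^ 2 - 1) * x) : ℝ) : ℂ) = ((n - 1 : ℝ) * S : ℝ) := by
      push_cast
      linear_combination (n:ℂ)^2 * h1 - (n:ℂ) * h2 + (n:ℂ) * m1 - m2
    have h4 := Complex.ofReal_injective h3
    have h5 : (n:ℝ) * (((n:ℝ) ^ 2 - 1) * x) ≤ n * S := by rw [h4]; nlinarith
    exact le_of_mul_le_mul_left h5 hn
  · rw [if_neg hsr, zero_mul] at h2
    have h3 : ((((n:ℝ) ^ 2 - 1) * x : ℝ) : ℂ) = (S : ℝ) := by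
      push_cast
      linear_combination (n:ℂ) * h1 - h2 + m1
    exact le_of_eq (Complex.ofReal_injective h3)


/-- Hermitian matrix representing the functional attached to a label. -/
noncomputable def lblM {n : ℕ} : EntryLabel n → Matrix (Fin n) (Fin n) ℂ :=
  Sum.elim (fun j => sg j j)
    (Sum.elim (fun p => (((Real.sqrt 2)⁻¹ : ℝ) : ℂ) • (sg p.1.1 p.1.2 + sg p.1.2 p.1.1))
      (fun p => (Complex.I * ((Real.sqrt 2)⁻¹ : ℝ)) • (sg p.1.1 p.1.2 - sg p.1.2 p.1.1)))

lemma sqrt_two_inv_add (x : ℝ) : (Real.sqrt 2)⁻¹ * (x + x) = Real.sqrt 2 * x := by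
  have h : Real.sqrt 2 * Real.sqrt 2 = 2 := Real.mul_self_sqrt (by norm_num)
  have h0 : Real.sqrt 2 ≠ 0 := by positivity
  field_simp
  nlinarith [congrArg (· * x) h]

lemma trace_lblM {n : ℕ} (A : Matrix (Fin n) (Fin n) ℂ) (hA : Aᴴ = A) (l : EntryLabel n) :
    (lblM l * A).trace = (entryValue A l : ℂ) := by
  have hs : ∀ j k, A k j = star (A j k) := by
    intro j k
    conv_lhs => rw [← hA]
    rfl
  rcases l with j | p | p
  · simp only [lblM, entryValue, Sum.elim_inl]
    rw [tr_sg_mul]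
    exact (Complex.conj_eq_iff_re.1 (hs j j).symm).symm
  · simp only [lblM, entryValue, Sum.elim_inl, Sum.elim_inr]
    rw [Matrix.smul_mul, trace_smul, add_mul, trace_add, tr_sg_mul, tr_sg_mul, hs p.1.1 p.1.2,
      ← sqrt_two_inv_add]
    apply Complex.ext <;> simp
  · simp only [lblM, entryValue, Sum.elim_inr]
    rw [Matrix.smul_mul, trace_smul, sub_mul, trace_sub, tr_sg_mul, tr_sg_mul, hs p.1.1 p.1.2,
      ← sqrt_two_inv_add]
    apply Complex.ext <;> simp
    ring

lemma sg_conj {n : ℕ} (j k : Fin n) : (sg j k)ᴴ = sg k j := by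
  simp [sg]

lemma lblM_herm {n : ℕ} (l : EntryLabel n) : (lblM l)ᴴ = lblM l := by
  rcases l with j | p | p
  · simp [lblM, sg_conj]
  · simp only [lblM, Sum.elim_inl, Sum.elim_inr]
    rw [conjTranspose_smul, conjTranspose_add, sg_conj, sg_conj, add_comm]
    congr 1
    simp
  · simp only [lblM, Sum.elim_inr]
    rw [conjTranspose_smul, conjTranspose_sub, sg_conj, sg_conj, ← neg_sub, smul_neg, ← neg_smul]
    congr 1
    simp

lemma entryValue_lblM_self {n : ℕ} (l : EntryLabel n) : entryValue (lblM l) l = 1 := by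
  have h : Real.sqrt 2 * Real.sqrt 2 = 2 := Real.mul_self_sqrt (by norm_num)
  have h0 : Real.sqrt 2 ≠ 0 := by positivity
  rcases l with j | p | p
  · simp [lblM, entryValue, sg_apply]
  · have := p.2.ne
    have h2 := p.2.ne'
    simp [lblM, entryValue, sg_apply, this, h2]
    linarith
  · have := p.2.ne
    have h2 := p.2.ne'
    simp [lblM, entryValue, sg_apply, this, h2]
    linarith

lemma entryValue_lblM_ne {n : ℕ} (l l' : EntryLabel n) (h : l ≠ l') :
    entryValue (lblM l) l' = 0 := by
  rcases l with j | ⟨⟨p1, p2⟩, hp⟩ | ⟨⟨p1, p2⟩, hp⟩ <;>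
    rcases l' with k | ⟨⟨q1, q2⟩, hq⟩ | ⟨⟨q1, q2⟩, hq⟩ <;>
    simp only [lblM, entryValue, Sum.elim_inl, Sum.elim_inr, Matrix.smul_apply, Matrix.add_apply,
      Matrix.sub_apply, sg_apply] <;>
    split_ifs <;>
    first
    | (simp; done)
    | (exfalso; apply h; grind)
    | (exfalso; grind)

lemma trace_lblM_lblM {n : ℕ} (l l' : EntryLabel n) :
    (lblM l * lblM l').trace = (open Classical in if l = l' then 1 else 0 : ℂ) := by
  rw [trace_lblM _ (lblM_herm l')]
  split_ifs with h
  · rw [h, entryValue_lblM_self]; simp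
  · rw [entryValue_lblM_ne _ _ (Ne.symm h)]; simp

lemma sum_norm_sg {n : ℕ} (j k : Fin n) : ∑ a, ∑ b, ‖sg j k a b‖ = 1 := by
  have : ∀ a b, ‖sg j k a b‖ = if j = a then (if k = b then 1 else 0) else 0 := by
    intro a b
    rw [sg_apply, ite_and]
    split_ifs <;> simp
  simp [this]

lemma sum_norm_comb {n : ℕ} (c : ℂ) (X Y Z : Matrix (Fin n) (Fin n) ℂ)
    (hX : ∑ a, ∑ b, ‖X a b‖ = 1) (hY : ∑ a, ∑ b, ‖Y a b‖ = 1)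
    (hZ : ∀ a b, ‖Z a b‖ ≤ ‖c‖ * (‖X a b‖ + ‖Y a b‖)) :
    ∑ a, ∑ b, ‖Z a b‖ ≤ ‖c‖ * (1 + 1) := by
  calc ∑ a, ∑ b, ‖Z a b‖ ≤ ∑ a, ∑ b, ‖c‖ * (‖X a b‖ + ‖Y a b‖) :=
        Finset.sum_le_sum fun a _ => Finset.sum_le_sum fun b _ => hZ a b
    _ = ‖c‖ * (∑ a, ∑ b, ‖X a b‖ + ∑ a, ∑ b, ‖Y a b‖) := by
        simp only [← Finset.mul_sum, Finset.sum_add_distrib]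
    _ = _ := by rw [hX, hY]

lemma sum_norm_lblM {n : ℕ} (l : EntryLabel n) : ∑ a, ∑ b, ‖lblM l a b‖ ≤ Real.sqrt 2 := by
  have h2 : (Real.sqrt 2)⁻¹ * (1 + 1) = Real.sqrt 2 := by rw [sqrt_two_inv_add, mul_one]
  have h3 : ‖(((Real.sqrt 2)⁻¹ : ℝ) : ℂ)‖ = (Real.sqrt 2)⁻¹ := by
    rw [Complex.norm_real, Real.norm_of_nonneg (by positivity)]
  rcases l with j | p | p
  · simp only [lblM, Sum.elim_inl]
    rw [sum_norm_sg]
    exact Real.one_le_sqrt.2 (by norm_num)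
  · simp only [lblM, Sum.elim_inl, Sum.elim_inr]
    refine (sum_norm_comb _ _ _ _ (sum_norm_sg p.1.1 p.1.2) (sum_norm_sg p.1.2 p.1.1)
      fun a b => ?_).trans (by rw [h3, h2])
    rw [Matrix.smul_apply, Matrix.add_apply, smul_eq_mul, norm_mul]
    gcongr
    exact norm_add_le _ _
  · simp only [lblM, Sum.elim_inr]
    refine (sum_norm_comb _ _ _ _ (sum_norm_sg p.1.1 p.1.2) (sum_norm_sg p.1.2 p.1.1)
      fun a b => ?_).trans (by rw [h3, h2])
    rw [Matrix.smul_apply, Matrix.sub_apply, smul_eq_mul, norm_mul, norm_mul, Complex.norm_I,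
      one_mul]
    gcongr
    exact norm_sub_le _ _


lemma entryValue_deriv {n : ℕ} (c : ℝ → Matrix (Fin n) (Fin n) ℂ) (C : Matrix (Fin n) (Fin n) ℂ)
    (hc : ∀ i j, HasDerivAt (fun t => c t i j) (C i j) 0) (l : EntryLabel n) :
    HasDerivAt (fun t => entryValue (c t) l) (entryValue C l) 0 := by
  have hre : ∀ i j, HasDerivAt (fun t => (c t i j).re) (C i j).re 0 := fun i j =>
    Complex.reCLM.hasFDerivAt.comp_hasDerivAt (0:ℝ) (hc i j)
  have him : ∀ i j, HasDerivAt (fun t => (c t i j).im) (C i j).im 0 := fun i j =>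
    Complex.imCLM.hasFDerivAt.comp_hasDerivAt (0:ℝ) (hc i j)
  rcases l with j | p | p
  · exact hre j j
  · exact (hre _ _).const_mul _
  · exact (him _ _).const_mul _

lemma entryValue_cont {n : ℕ} (l : EntryLabel n) :
    Continuous (fun A : Matrix (Fin n) (Fin n) ℂ => entryValue A l) := by
  rcases l with j | p | p
  · exact Complex.continuous_re.comp (continuous_id.matrix_elem j j)
  · exact (Complex.continuous_re.comp (continuous_id.matrix_elem _ _)).const_mul _
  · exact (Complex.continuous_im.comp (continuous_id.matrix_elem _ _)).const_mul _

lemma clm_eq_sum {d : ℕ} (L : (Fin d → ℝ) →L[ℝ] ℝ) (v : Fin d → ℝ) :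
    L v = ∑ k, v k * L (Pi.single k 1) := by
  have h : v = ∑ k, v k • (Pi.single k 1 : Fin d → ℝ) := by
    ext j
    simp [Finset.sum_apply, Pi.single_apply]
  conv_lhs => rw [h]
  rw [map_sum]
  simp

lemma ibp_key_tr {n : ℕ} {Ω : Type*} [MeasurableSpace Ω] (P : Measure Ω)
    [IsProbabilityMeasure P]
    (U : Ω → Matrix (Fin n) (Fin n) ℂ) (hUmeas : Measurable U)
    (hUmem : ∀ ω, U ω ∈ Matrix.unitaryGroup (Fin n) ℂ)
    (hUhaar : ∀ V ∈ Matrix.unitaryGroup (Fin n) ℂ,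
      Measure.map (fun ω => V * U ω) P = Measure.map U P)
    (D : Matrix (Fin n) (Fin n) ℂ) (hD : Dᴴ = D) (hDtr : D.trace = 0)
    (ψ : Matrix (Fin n) (Fin n) ℂ → ℂ) (hψ : Continuous ψ)
    (ψ' : Matrix (Fin n) (Fin n) ℂ → Matrix (Fin n) (Fin n) ℂ → ℂ)
    (hψ' : Continuous fun p : Matrix (Fin n) (Fin n) ℂ × Matrix (Fin n) (Fin n) ℂ => ψ' p.1 p.2)
    (hder : ∀ (c : ℝ → Matrix (Fin n) (Fin n) ℂ) (C : Matrix (Fin n) (Fin n) ℂ),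
      (∀ i j, HasDerivAt (fun t => c t i j) (C i j) 0) →
      HasDerivAt (fun t => ψ (c t)) (ψ' (c 0) C) 0)
    (G : Matrix (Fin n) (Fin n) ℂ → Matrix (Fin n) (Fin n) ℂ) (hGc : Continuous G)
    (hG : ∀ A C, Aᴴ = A → Cᴴ = C → ψ' A C = (G A * C).trace)
    (N : Matrix (Fin n) (Fin n) ℂ) :
    n * ∫ ω, ψ (U ω * D * (U ω)ᴴ) * (N * (U ω * D * (U ω)ᴴ)).trace ∂P =
      ∫ ω, (fun A : Matrix (Fin n) (Fin n) ℂ => (N * ((G A * A - A * G A) * A)).trace)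
        (U ω * D * (U ω)ᴴ) ∂P := by
  have hInt : ∀ g : Matrix (Fin n) (Fin n) ℂ → ℂ, Continuous g →
      Integrable (fun ω => g (U ω * D * (U ω)ᴴ)) P := fun g hg =>
    integrable_unitary P U hUmeas hUmem (fun M => g (M * D * Mᴴ)) (hg.comp (by fun_prop))
  have h := fun p q => ibp_key P U hUmeas hUmem hUhaar D hD ψ hψ ψ' hψ' hder G hGc hG p q
  simp only [hDtr, ite_self, zero_mul, zero_add] at h
  have htr : ∀ X : Matrix (Fin n) (Fin n) ℂ, (N * X).trace = ∑ a, ∑ b, N a b * X b a := by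
    intro X
    simp [Matrix.trace, Matrix.mul_apply]
  have hc3 : ∀ p q, Continuous (fun A : Matrix (Fin n) (Fin n) ℂ =>
      ((G A * A - A * G A) * A) p q) := fun p q =>
    Continuous.matrix_elem (by fun_prop) p q
  simp only [htr]
  rw [integral_finsetSum _ (fun a _ => integrable_finsetSum _ fun b _ =>
    (hInt _ (hc3 b a)).const_mul (N a b))]
  have e1 : ∀ ω, ψ (U ω * D * (U ω)ᴴ) * ∑ a, ∑ b, N a b * (U ω * D * (U ω)ᴴ) b a =
      ∑ a, ∑ b, N a b * (ψ (U ω * D * (U ω)ᴴ) * (U ω * D * (U ω)ᴴ) b a) := by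
    intro ω
    simp only [Finset.mul_sum]
    refine Finset.sum_congr rfl fun a _ => Finset.sum_congr rfl fun b _ => by ring
  simp only [e1]
  have i1 : ∀ a b, Integrable (fun ω => N a b * (ψ (U ω * D * (U ω)ᴴ) * (U ω * D * (U ω)ᴴ) b a)) P :=
    fun a b => (hInt (fun A => ψ A * A b a) (by fun_prop)).const_mul _
  rw [integral_finsetSum _ (fun a _ => integrable_finsetSum _ fun b _ => i1 a b), Finset.mul_sum]
  refine Finset.sum_congr rfl fun a _ => ?_
  rw [integral_finsetSum _ (fun b _ => i1 a b),
    integral_finsetSum _ (fun b _ => (hInt _ (hc3 b a)).const_mul (N a b)), Finset.mul_sum]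
  refine Finset.sum_congr rfl fun b _ => ?_
  rw [integral_const_mul, integral_const_mul, ← h b a]
  ring

/-- The Stein kernel. -/
noncomputable def steinT {n d : ℕ} (κ : ℝ) (φ : Fin d → EntryLabel n)
    (A : Matrix (Fin n) (Fin n) ℂ) (i j : Fin d) : ℝ :=
  κ ^ 2 / n * (lblM (φ i) * ((lblM (φ j) * A - A * lblM (φ j)) * A)).trace.re

lemma steinT_cont {n d : ℕ} (κ : ℝ) (φ : Fin d → EntryLabel n) (i j : Fin d) :
    Continuous (fun A => steinT κ φ A i j) := by
  unfold steinT
  have h : Continuous (fun A : Matrix (Fin n) (Fin n) ℂ =>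
    (lblM (φ i) * ((lblM (φ j) * A - A * lblM (φ j)) * A)).trace) :=
    Continuous.matrix_trace (by fun_prop)
  exact (Complex.continuous_re.comp h).const_mul _

lemma stein_identity {n d : ℕ} {Ω : Type*} [MeasurableSpace Ω] (P : Measure Ω)
    [IsProbabilityMeasure P]
    (U : Ω → Matrix (Fin n) (Fin n) ℂ) (hUmeas : Measurable U)
    (hUmem : ∀ ω, U ω ∈ Matrix.unitaryGroup (Fin n) ℂ)
    (hUhaar : ∀ V ∈ Matrix.unitaryGroup (Fin n) ℂ,
      Measure.map (fun ω => V * U ω) P = Measure.map U P)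
    (D : Matrix (Fin n) (Fin n) ℂ) (hD : Dᴴ = D) (hDtr : D.trace = 0) (hn : n ≠ 0)
    (κ : ℝ) (φ : Fin d → EntryLabel n)
    (u : (Fin d → ℝ) → ℝ) (hu : ContDiff ℝ 1 u) (i : Fin d) :
    ∫ ω, (κ * entryValue (U ω * D * (U ω)ᴴ) (φ i)) *
      u (fun k => κ * entryValue (U ω * D * (U ω)ᴴ) (φ k)) ∂P =
    ∑ j, ∫ ω, steinT κ φ (U ω * D * (U ω)ᴴ) i j *
      fderiv ℝ u (fun k => κ * entryValue (U ω * D * (U ω)ᴴ) (φ k)) (Pi.single j 1) ∂P := by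
  have hInt : ∀ g : Matrix (Fin n) (Fin n) ℂ → ℂ, Continuous g →
      Integrable (fun ω => g (U ω * D * (U ω)ᴴ)) P := fun g hg =>
    integrable_unitary P U hUmeas hUmem (fun M => g (M * D * Mᴴ)) (hg.comp (by fun_prop))
  obtain ⟨y, hy⟩ : ∃ y : Matrix (Fin n) (Fin n) ℂ → Fin d → ℝ,
      ∀ A, y A = fun k => κ * entryValue A (φ k) := ⟨_, fun _ => rfl⟩
  simp only [← hy]
  have hyc : Continuous y := by
    rw [show y = fun A k => κ * entryValue A (φ k) from funext hy]
    exact continuous_pi fun k => (entryValue_cont (φ k)).const_mul _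
  have hfd : Continuous (fderiv ℝ u) := hu.continuous_fderiv (by simp)
  obtain ⟨Gf, hGf⟩ : ∃ Gf : Matrix (Fin n) (Fin n) ℂ → Matrix (Fin n) (Fin n) ℂ,
      ∀ A, Gf A = ∑ k, ((κ * fderiv ℝ u (y A) (Pi.single k 1) : ℝ) : ℂ) • lblM (φ k) :=
    ⟨_, fun _ => rfl⟩
  have hGc : Continuous Gf := by
    rw [show Gf = fun A => ∑ k, ((κ * fderiv ℝ u (y A) (Pi.single k 1) : ℝ) : ℂ) • lblM (φ k)
      from funext hGf]
    refine continuous_finsetSum _ fun k _ => Continuous.fun_smul ?_ continuous_const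
    exact Complex.continuous_ofReal.comp
      (((hfd.comp hyc).clm_apply continuous_const).const_mul _)
  have h := ibp_key_tr P U hUmeas hUmem hUhaar D hD hDtr (fun A => (u (y A) : ℂ))
    (Complex.continuous_ofReal.comp (hu.continuous.comp hyc))
    (fun A C => ((fderiv ℝ u (y A) (y C) : ℝ) : ℂ))
    (Complex.continuous_ofReal.comp
      ((hfd.comp (hyc.comp continuous_fst)).clm_apply (hyc.comp continuous_snd)))
    (by
      intro c C hc
      have h1 : HasDerivAt (fun t => y (c t)) (y C) 0 := by
        simp only [hy]
        exact hasDerivAt_pi.2 fun k => (entryValue_deriv c C hc (φ k)).const_mul κ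
      have h2 : HasFDerivAt u (fderiv ℝ u (y (c 0))) (y (c 0)) :=
        (hu.differentiable (by simp) _).hasFDerivAt
      exact (h2.comp_hasDerivAt (0:ℝ) h1).ofReal_comp)
    Gf hGc
    (by
      intro A C _ hC
      rw [hGf, clm_eq_sum, Finset.sum_mul, trace_sum]
      push_cast
      refine Finset.sum_congr rfl fun k _ => ?_
      rw [Matrix.smul_mul, trace_smul, trace_lblM C hC]
      simp only [hy, smul_eq_mul]
      push_cast
      ring)
    (lblM (φ i))
  have hn' : (n:ℝ) ≠ 0 := by exact_mod_cast hn
  have hA : ∀ ω, (U ω * D * (U ω)ᴴ)ᴴ = U ω * D * (U ω)ᴴ := by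
    intro ω
    simp [conjTranspose_mul, hD, mul_assoc]
  have e1 : ∀ ω, ((u (y (U ω * D * (U ω)ᴴ)) : ℝ) : ℂ) * (lblM (φ i) * (U ω * D * (U ω)ᴴ)).trace =
      ((u (y (U ω * D * (U ω)ᴴ)) * entryValue (U ω * D * (U ω)ᴴ) (φ i) : ℝ) : ℂ) := by
    intro ω
    rw [trace_lblM _ (hA ω)]
    push_cast
    rfl
  simp only [e1] at h
  rw [integral_complex_ofReal] at h
  have hTi : ∀ j, Integrable (fun ω => steinT κ φ (U ω * D * (U ω)ᴴ) i j *
      fderiv ℝ u (y (U ω * D * (U ω)ᴴ)) (Pi.single j 1)) P := by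
    intro j
    have := (hInt (fun A => ((steinT κ φ A i j * fderiv ℝ u (y A) (Pi.single j 1) : ℝ) : ℂ))
      (Complex.continuous_ofReal.comp ((steinT_cont κ φ i j).mul
        ((hfd.comp hyc).clm_apply continuous_const)))).re
    simpa using this
  rw [← integral_finsetSum _ fun j _ => hTi j]
  have e2 : ∀ A : Matrix (Fin n) (Fin n) ℂ,
      ∑ j, steinT κ φ A i j * fderiv ℝ u (y A) (Pi.single j 1) =
      κ / n * (lblM (φ i) * ((Gf A * A
        - A * Gf A) * A)).trace.re := by
    intro A
    rw [hGf, Finset.sum_mul, Finset.mul_sum, ← Finset.sum_sub_distrib, Finset.sum_mul, Finset.mul_sum,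
      trace_sum, Complex.re_sum, Finset.mul_sum]
    refine Finset.sum_congr rfl fun k _ => ?_
    rw [Matrix.smul_mul, Matrix.mul_smul, ← smul_sub, Matrix.smul_mul, Matrix.mul_smul, trace_smul,
      smul_eq_mul, Complex.re_ofReal_mul, steinT]
    ring
  simp only [e2]
  rw [integral_const_mul]
  have hGc2 : Continuous (fun A : Matrix (Fin n) (Fin n) ℂ =>
      (lblM (φ i) * ((Gf A * A - A * Gf A) * A)).trace) := by
    refine Continuous.matrix_trace ?_
    fun_prop
  have hGi : Integrable (fun ω => (fun A : Matrix (Fin n) (Fin n) ℂ =>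
      (lblM (φ i) * ((Gf A * A
        - A * Gf A) * A)).trace)
        (U ω * D * (U ω)ᴴ)) P :=
    hInt _ hGc2
  have e3 := congrArg Complex.re h
  have e4 := Complex.reCLM.integral_comp_comm hGi
  simp only [Complex.reCLM_apply] at e4
  rw [e4, ← e3, ← Complex.ofReal_natCast, ← Complex.ofReal_mul, Complex.ofReal_re]
  rw [← mul_assoc, div_mul_cancel₀ _ hn', ← integral_const_mul]
  congr 1
  funext ω
  ring


lemma weighted_sq {Ω : Type*} [MeasurableSpace Ω] (P : Measure Ω) {ι : Type*} [Fintype ι]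
    (c : ι → ℝ) (hc : ∀ i, 0 ≤ c i) (x : ι → Ω → ℝ)
    (hx : ∀ i, Integrable (fun ω => x i ω ^ 2) P) (m : ℝ) (hm : ∀ i, ∫ ω, x i ω ^ 2 ∂P ≤ m)
    (Y : Ω → ℝ) (hYi : Integrable (fun ω => Y ω ^ 2) P)
    (hY : ∀ ω, |Y ω| ≤ ∑ i, c i * x i ω) :
    ∫ ω, Y ω ^ 2 ∂P ≤ (∑ i, c i) ^ 2 * m := by
  have hpt : ∀ ω, Y ω ^ 2 ≤ (∑ i, c i) * ∑ i, c i * x i ω ^ 2 := by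
    intro ω
    have h1 : Y ω ^ 2 ≤ (∑ i, c i * x i ω) ^ 2 := by
      rw [← sq_abs]
      exact pow_le_pow_left₀ (abs_nonneg _) (hY ω) 2
    refine h1.trans ?_
    exact Finset.sum_sq_le_sum_mul_sum_of_sq_le_mul _ (fun i _ => hc i)
      (fun i _ => mul_nonneg (hc i) (sq_nonneg _)) (fun i _ => le_of_eq (by ring))
  calc ∫ ω, Y ω ^ 2 ∂P ≤ ∫ ω, (∑ i, c i) * ∑ i, c i * x i ω ^ 2 ∂P :=
        integral_mono hYi ((integrable_finsetSum _ fun i _ => (hx i).const_mul _).const_mul _) hpt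
    _ = (∑ i, c i) * ∑ i, c i * ∫ ω, x i ω ^ 2 ∂P := by
        rw [integral_const_mul, integral_finsetSum _ fun i _ => (hx i).const_mul _]
        simp only [integral_const_mul]
    _ ≤ (∑ i, c i) * ∑ i, c i * m := by
        have := Finset.sum_nonneg fun i (_ : i ∈ Finset.univ) => hc i
        gcongr with i _
        · exact hc i
        · exact hm i
    _ = _ := by rw [← Finset.sum_mul]; ring

lemma norm_tr_mul {n : ℕ} (N X : Matrix (Fin n) (Fin n) ℂ) :
    |(N * X).trace.re| ≤ ∑ p : Fin n × Fin n, ‖N p.1 p.2‖ * ‖X p.2 p.1‖ := by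
  refine (Complex.abs_re_le_norm _).trans ?_
  have : (N * X).trace = ∑ p : Fin n × Fin n, N p.1 p.2 * X p.2 p.1 := by
    rw [Fintype.sum_prod_type]
    simp [Matrix.trace, Matrix.mul_apply]
  rw [this]
  refine (norm_sum_le _ _).trans (le_of_eq ?_)
  simp only [norm_mul]

lemma norm_tr_mul4 {n : ℕ} (M N A : Matrix (Fin n) (Fin n) ℂ) :
    |(M * A * N * A).trace.re| ≤ ∑ p : (Fin n × Fin n) × (Fin n × Fin n),
      (‖M p.1.1 p.1.2‖ * ‖N p.2.1 p.2.2‖) * (‖A p.1.2 p.2.1‖ * ‖A p.2.2 p.1.1‖) := by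
  refine (Complex.abs_re_le_norm _).trans ?_
  have : (M * A * N * A).trace = ∑ p : (Fin n × Fin n) × (Fin n × Fin n),
      (M p.1.1 p.1.2 * N p.2.1 p.2.2) * (A p.1.2 p.2.1 * A p.2.2 p.1.1) := by
    simp only [Fintype.sum_prod_type]
    simp only [mul_assoc]
    simp only [Matrix.trace, Matrix.mul_apply, Matrix.diag, Finset.mul_sum]
    refine Finset.sum_congr rfl fun a _ => Finset.sum_congr rfl fun b _ =>
      Finset.sum_congr rfl fun c _ => Finset.sum_congr rfl fun e _ => by ring
  rw [this]
  refine (norm_sum_le _ _).trans (le_of_eq ?_)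
  simp only [norm_mul]

lemma sum_norm_mul {n : ℕ} (M N : Matrix (Fin n) (Fin n) ℂ) :
    ∑ p : Fin n × Fin n, ‖(M * N) p.1 p.2‖ ≤ (∑ a, ∑ b, ‖M a b‖) * ∑ a, ∑ b, ‖N a b‖ := by
  rw [Fintype.sum_prod_type]
  calc ∑ a, ∑ b, ‖(M * N) a b‖ ≤ ∑ a, ∑ b, ∑ c, ‖M a c‖ * ‖N c b‖ := by
        gcongr with a _ b _
        rw [Matrix.mul_apply]
        refine (norm_sum_le _ _).trans (le_of_eq ?_)
        simp only [norm_mul]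
    _ = ∑ a, ∑ c, ‖M a c‖ * ∑ b, ‖N c b‖ := by
        refine Finset.sum_congr rfl fun a _ => ?_
        rw [Finset.sum_comm]
        simp only [Finset.mul_sum]
    _ ≤ ∑ a, ∑ c, ‖M a c‖ * ∑ c', ∑ b, ‖N c' b‖ := by
        refine Finset.sum_le_sum fun a _ => Finset.sum_le_sum fun c _ =>
          mul_le_mul_of_nonneg_left ?_ (norm_nonneg _)
        exact Finset.single_le_sum (f := fun c => ∑ b, ‖N c b‖)
          (fun c _ => Finset.sum_nonneg fun b _ => norm_nonneg _) (Finset.mem_univ c)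
    _ = _ := by simp only [← Finset.sum_mul]

lemma integrable_unitary_real {n : ℕ} {Ω : Type*} [MeasurableSpace Ω] (P : Measure Ω)
    [IsProbabilityMeasure P]
    (U : Ω → Matrix (Fin n) (Fin n) ℂ) (hUmeas : Measurable U)
    (hUmem : ∀ ω, U ω ∈ Matrix.unitaryGroup (Fin n) ℂ)
    (D : Matrix (Fin n) (Fin n) ℂ)
    (g : Matrix (Fin n) (Fin n) ℂ → ℝ) (hg : Continuous g) :
    Integrable (fun ω => g (U ω * D * (U ω)ᴴ)) P := by
  have := (integrable_unitary P U hUmeas hUmem (fun M => ((g (M * D * Mᴴ) : ℝ) : ℂ))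
    (Complex.continuous_ofReal.comp (hg.comp (by fun_prop)))).re
  simpa using this

lemma alpha_bound {n : ℕ} {Ω : Type*} [MeasurableSpace Ω] (P : Measure Ω)
    [IsProbabilityMeasure P]
    (U : Ω → Matrix (Fin n) (Fin n) ℂ) (hUmeas : Measurable U)
    (hUmem : ∀ ω, U ω ∈ Matrix.unitaryGroup (Fin n) ℂ)
    (D : Matrix (Fin n) (Fin n) ℂ) (m : ℝ) (hm0 : 0 ≤ m)
    (hm : ∀ r s, ∫ ω, ‖(U ω * D * (U ω)ᴴ) r s‖ ^ 2 ∂P ≤ m) (l l' : EntryLabel n) :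
    ∫ ω, (lblM l * lblM l' * (U ω * D * (U ω)ᴴ)).trace.re ^ 2 ∂P ≤ 4 * m := by
  have h := weighted_sq P (ι := Fin n × Fin n) (fun p => ‖(lblM l * lblM l') p.1 p.2‖)
    (fun _ => norm_nonneg _) (fun p ω => ‖(U ω * D * (U ω)ᴴ) p.2 p.1‖)
    (fun p => integrable_unitary_real P U hUmeas hUmem D (fun A => ‖A p.2 p.1‖ ^ 2)
      ((continuous_id.matrix_elem _ _).norm.pow 2)) m (fun p => hm _ _)
    (fun ω => (lblM l * lblM l' * (U ω * D * (U ω)ᴴ)).trace.re)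
    (integrable_unitary_real P U hUmeas hUmem D
      (fun A => (lblM l * lblM l' * A).trace.re ^ 2)
      ((Complex.continuous_re.comp (Continuous.matrix_trace (by fun_prop))).pow 2))
    (fun ω => norm_tr_mul _ _)
  refine h.trans ?_
  have h2 : ∑ p : Fin n × Fin n, ‖(lblM l * lblM l') p.1 p.2‖ ≤ 2 := by
    refine (sum_norm_mul _ _).trans ?_
    calc _ ≤ Real.sqrt 2 * Real.sqrt 2 := by
          gcongr
          · exact sum_norm_lblM l
          · exact sum_norm_lblM l'
      _ = 2 := Real.mul_self_sqrt (by norm_num)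
  have h3 : 0 ≤ ∑ p : Fin n × Fin n, ‖(lblM l * lblM l') p.1 p.2‖ :=
    Finset.sum_nonneg fun _ _ => norm_nonneg _
  have h4 := pow_le_pow_left₀ h3 h2 2
  nlinarith

lemma beta_bound {n : ℕ} {Ω : Type*} [MeasurableSpace Ω] (P : Measure Ω)
    [IsProbabilityMeasure P]
    (U : Ω → Matrix (Fin n) (Fin n) ℂ) (hUmeas : Measurable U)
    (hUmem : ∀ ω, U ω ∈ Matrix.unitaryGroup (Fin n) ℂ)
    (D : Matrix (Fin n) (Fin n) ℂ) (m : ℝ) (hm0 : 0 ≤ m)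
    (hm : ∀ r s, ∫ ω, ‖(U ω * D * (U ω)ᴴ) r s‖ ^ 2 ∂P ≤ m)
    (op : ℝ) (hop : ∀ ω r s, ‖(U ω * D * (U ω)ᴴ) r s‖ ≤ op) (l l' : EntryLabel n) :
    ∫ ω, (lblM l * (U ω * D * (U ω)ᴴ) * lblM l' * (U ω * D * (U ω)ᴴ)).trace.re ^ 2 ∂P
      ≤ 4 * (op ^ 2 * m) := by
  have hc1 : ∀ r s : Fin n, Continuous fun A : Matrix (Fin n) (Fin n) ℂ => ‖A r s‖ :=
    fun r s => (continuous_id.matrix_elem _ _).norm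
  have hi : ∀ p : (Fin n × Fin n) × (Fin n × Fin n), Integrable (fun ω =>
      (‖(U ω * D * (U ω)ᴴ) p.1.2 p.2.1‖ * ‖(U ω * D * (U ω)ᴴ) p.2.2 p.1.1‖) ^ 2) P := fun p =>
    integrable_unitary_real P U hUmeas hUmem D
      (fun A => (‖A p.1.2 p.2.1‖ * ‖A p.2.2 p.1.1‖) ^ 2) (((hc1 _ _).mul (hc1 _ _)).pow 2)
  have h := weighted_sq P (ι := (Fin n × Fin n) × (Fin n × Fin n))
    (fun p => ‖lblM l p.1.1 p.1.2‖ * ‖lblM l' p.2.1 p.2.2‖)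
    (fun _ => by positivity)
    (fun p ω => ‖(U ω * D * (U ω)ᴴ) p.1.2 p.2.1‖ * ‖(U ω * D * (U ω)ᴴ) p.2.2 p.1.1‖)
    hi (op ^ 2 * m) (fun p => by
      calc _ ≤ ∫ ω, op ^ 2 * ‖(U ω * D * (U ω)ᴴ) p.1.2 p.2.1‖ ^ 2 ∂P := by
            refine integral_mono (hi p) ((integrable_unitary_real P U hUmeas hUmem D
              (fun A => ‖A p.1.2 p.2.1‖ ^ 2) ((hc1 _ _).pow 2)).const_mul _) fun ω => ?_
            have h1 := pow_le_pow_left₀ (norm_nonneg _) (hop ω p.2.2 p.1.1) 2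
            have h2 := sq_nonneg ‖(U ω * D * (U ω)ᴴ) p.1.2 p.2.1‖
            simp only [mul_pow]
            nlinarith
        _ ≤ _ := by
            rw [integral_const_mul]
            exact mul_le_mul_of_nonneg_left (hm _ _) (sq_nonneg _))
    (fun ω => (lblM l * (U ω * D * (U ω)ᴴ) * lblM l' * (U ω * D * (U ω)ᴴ)).trace.re)
    (integrable_unitary_real P U hUmeas hUmem D
      (fun A => (lblM l * A * lblM l' * A).trace.re ^ 2)
      ((Complex.continuous_re.comp (Continuous.matrix_trace (by fun_prop))).pow 2))
    (fun ω => norm_tr_mul4 _ _ _)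
  refine h.trans ?_
  have h2 : ∑ p : (Fin n × Fin n) × (Fin n × Fin n),
      ‖lblM l p.1.1 p.1.2‖ * ‖lblM l' p.2.1 p.2.2‖ ≤ 2 := by
    rw [Fintype.sum_prod_type]
    simp only [← Finset.mul_sum, ← Finset.sum_mul]
    simp only [Fintype.sum_prod_type]
    calc _ ≤ Real.sqrt 2 * Real.sqrt 2 := by
          gcongr
          · exact sum_norm_lblM l
          · exact sum_norm_lblM l'
      _ = 2 := Real.mul_self_sqrt (by norm_num)
  have h3 : 0 ≤ ∑ p : (Fin n × Fin n) × (Fin n × Fin n),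
      ‖lblM l p.1.1 p.1.2‖ * ‖lblM l' p.2.1 p.2.2‖ :=
    Finset.sum_nonneg fun _ _ => by positivity
  have h4 := pow_le_pow_left₀ h3 h2 2
  have h5 : 0 ≤ op ^ 2 * m := by positivity
  nlinarith


lemma conj_D2 {n : ℕ} (U D : Matrix (Fin n) (Fin n) ℂ) (hU : U ∈ Matrix.unitaryGroup (Fin n) ℂ)
    (c : ℂ) : U * (D * D - c • 1) * Uᴴ = (U * D * Uᴴ) * (U * D * Uᴴ) - c • 1 := by
  have h1 : Uᴴ * U = 1 := by
    rw [← star_eq_conjTranspose]; exact Matrix.mem_unitaryGroup_iff'.1 hU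
  have h2 : U * Uᴴ = 1 := by
    rw [← star_eq_conjTranspose]; exact Matrix.mem_unitaryGroup_iff.1 hU
  rw [mul_sub, sub_mul, Matrix.mul_smul, mul_one, Matrix.smul_mul, h2]
  congr 1
  calc U * (D * D) * Uᴴ = U * D * 1 * D * Uᴴ := by simp only [mul_one, mul_assoc]
    _ = _ := by rw [← h1]; simp only [mul_assoc]

lemma stein_var {n d : ℕ} {Ω : Type*} [MeasurableSpace Ω] (P : Measure Ω)
    [IsProbabilityMeasure P]
    (U : Ω → Matrix (Fin n) (Fin n) ℂ) (hUmeas : Measurable U)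
    (hUmem : ∀ ω, U ω ∈ Matrix.unitaryGroup (Fin n) ℂ)
    (hUhaar : ∀ V ∈ Matrix.unitaryGroup (Fin n) ℂ,
      Measure.map (fun ω => V * U ω) P = Measure.map U P)
    (D : Matrix (Fin n) (Fin n) ℂ) (hD : Dᴴ = D) (hDtr : D.trace = 0) (hn : 2 ≤ n)
    (S : ℝ) (hS : (D * D).trace = S) (hS0 : 0 < S)
    (op : ℝ) (hop : ∀ ω r s, ‖(U ω * D * (U ω)ᴴ) r s‖ ≤ op) (hSop : S ≤ n * op ^ 2)
    (S4 : ℝ) (hS4 : ((D * D - ((S / n : ℝ) : ℂ) • 1) * (D * D - ((S / n : ℝ) : ℂ) • 1)).trace = S4)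
    (hS40 : 0 ≤ S4) (hS4le : S4 ≤ op ^ 2 * S)
    (κ : ℝ) (hκ : κ ^ 2 = ((n:ℝ) ^ 2 - 1) / S)
    (φ : Fin d → EntryLabel n) (hφ : Function.Injective φ) (i j : Fin d) :
    ∫ ω, (steinT κ φ (U ω * D * (U ω)ᴴ) i j - if i = j then 1 else 0) ^ 2 ∂P ≤
      27 * (op ^ 2 / S) := by
  have hn2 : (2:ℝ) ≤ n := by exact_mod_cast hn
  have hq : 0 < (n:ℝ) ^ 2 - 1 := by nlinarith
  set q := (n:ℝ) ^ 2 - 1 with hqdef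
  set D2 := D * D - ((S / n : ℝ) : ℂ) • (1 : Matrix (Fin n) (Fin n) ℂ) with hD2
  have hD2h : D2ᴴ = D2 := by
    rw [hD2, conjTranspose_sub, conjTranspose_mul, hD, conjTranspose_smul, conjTranspose_one]
    congr 2
    simp
  have hnC : (n:ℂ) ≠ 0 := by
    have : n ≠ 0 := by omega
    exact_mod_cast this
  have hD2tr : D2.trace = 0 := by
    rw [hD2, trace_sub, trace_smul, trace_one, hS, Fintype.card_fin, smul_eq_mul]
    push_cast
    field_simp
    ring
  have m1 : ∀ r s, ∫ ω, ‖(U ω * D * (U ω)ᴴ) r s‖ ^ 2 ∂P ≤ S / q := fun r s => by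
    rw [le_div_iff₀' hq]
    exact haar_second P U hUmeas hUmem hUhaar D hD hDtr S hS hS0.le r s
  have m2 : ∀ r s, ∫ ω, ‖(U ω * D2 * (U ω)ᴴ) r s‖ ^ 2 ∂P ≤ op ^ 2 * S / q := fun r s => by
    rw [le_div_iff₀' hq]
    exact (haar_second P U hUmeas hUmem hUhaar D2 hD2h hD2tr S4 hS4 hS40 r s).trans hS4le
  have ha := alpha_bound P U hUmeas hUmem D2 _ (by positivity) m2 (φ i) (φ j)
  have hb := beta_bound P U hUmeas hUmem D _ (by positivity) m1 op hop (φ i) (φ j)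
  set a : Ω → ℝ := fun ω => (lblM (φ i) * lblM (φ j) * (U ω * D2 * (U ω)ᴴ)).trace.re with hadef
  set b : Ω → ℝ := fun ω =>
    (lblM (φ i) * (U ω * D * (U ω)ᴴ) * lblM (φ j) * (U ω * D * (U ω)ᴴ)).trace.re with hbdef
  have hai : Integrable (fun ω => a ω ^ 2) P :=
    integrable_unitary_real P U hUmeas hUmem D2
      (fun A => (lblM (φ i) * lblM (φ j) * A).trace.re ^ 2)
      ((Complex.continuous_re.comp (Continuous.matrix_trace (by fun_prop))).pow 2)
  have hbi : Integrable (fun ω => b ω ^ 2) P :=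
    integrable_unitary_real P U hUmeas hUmem D
      (fun A => (lblM (φ i) * A * lblM (φ j) * A).trace.re ^ 2)
      ((Complex.continuous_re.comp (Continuous.matrix_trace (by fun_prop))).pow 2)
  have hTi : Integrable (fun ω => (steinT κ φ (U ω * D * (U ω)ᴴ) i j - if i = j then 1 else 0) ^ 2) P :=
    integrable_unitary_real P U hUmeas hUmem D
      (fun A => (steinT κ φ A i j - if i = j then 1 else 0) ^ 2)
      (((steinT_cont κ φ i j).sub continuous_const).pow 2)
  have htrM : (lblM (φ i) * lblM (φ j)).trace = ((if i = j then 1 else 0 : ℝ) : ℂ) := by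
    rw [trace_lblM_lblM]
    by_cases hij : i = j
    · simp [hij]
    · rw [if_neg (fun h => hij (hφ h)), if_neg hij]; simp
  have hpt : ∀ ω, (steinT κ φ (U ω * D * (U ω)ᴴ) i j - if i = j then 1 else 0) ^ 2 ≤
      3 * (κ ^ 2 / n) ^ 2 * a ω ^ 2 + 3 * (κ ^ 2 / n) ^ 2 * b ω ^ 2 + 3 * (1 / (n:ℝ) ^ 2) ^ 2 := by
    intro ω
    have e1 : steinT κ φ (U ω * D * (U ω)ᴴ) i j =
        κ ^ 2 / n * (a ω + S / n * (if i = j then 1 else 0) - b ω) := by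
      rw [steinT, hadef, hbdef]
      simp only
      rw [hD2, conj_D2 _ _ (hUmem ω)]
      set A := U ω * D * (U ω)ᴴ
      rw [mul_sub (lblM (φ i) * lblM (φ j)), trace_sub, Matrix.mul_smul, trace_smul, mul_one, htrM,
        sub_mul, mul_sub, trace_sub, smul_eq_mul, ← Complex.ofReal_mul]
      simp only [Complex.sub_re, Complex.ofReal_re, ← mul_assoc]
      ring
    rw [e1]
    set e : ℝ := if i = j then 1 else 0 with he
    have he1 : e ^ 2 ≤ 1 := by rw [he]; split_ifs <;> norm_num
    have hz : κ ^ 2 / n * (a ω + S / n * e - b ω) - e =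
        κ ^ 2 / n * a ω - κ ^ 2 / n * b ω - 1 / (n:ℝ) ^ 2 * e := by
      rw [hκ, hqdef]
      field_simp
      ring
    rw [hz]
    have hz2 : (1 / (n:ℝ) ^ 2 * e) ^ 2 ≤ (1 / (n:ℝ) ^ 2) ^ 2 := by
      rw [mul_pow]
      exact mul_le_of_le_one_right (by positivity) he1
    nlinarith [sq_nonneg (κ ^ 2 / n * a ω + κ ^ 2 / n * b ω),
      sq_nonneg (κ ^ 2 / n * a ω + 1 / (n:ℝ) ^ 2 * e),
      sq_nonneg (κ ^ 2 / n * b ω - 1 / (n:ℝ) ^ 2 * e)]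
  have hI : ∫ ω, (steinT κ φ (U ω * D * (U ω)ᴴ) i j - if i = j then 1 else 0) ^ 2 ∂P ≤
      3 * (κ ^ 2 / n) ^ 2 * ∫ ω, a ω ^ 2 ∂P + 3 * (κ ^ 2 / n) ^ 2 * ∫ ω, b ω ^ 2 ∂P
        + 3 * (1 / (n:ℝ) ^ 2) ^ 2 := by
    have i1 := hai.const_mul (3 * (κ ^ 2 / n) ^ 2)
    have i2 := hbi.const_mul (3 * (κ ^ 2 / n) ^ 2)
    refine (integral_mono hTi ((i1.add i2).add (integrable_const _)) hpt).trans (le_of_eq ?_)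
    have e := integral_add (i1.add i2) (integrable_const (3 * (1 / (n:ℝ) ^ 2) ^ 2))
    simp only [Pi.add_apply] at e
    refine e.trans ?_
    rw [integral_add i1 i2, integral_const_mul, integral_const_mul]
    simp
  refine hI.trans ?_
  have hop2 : 0 ≤ op ^ 2 := sq_nonneg _
  have hk : (κ ^ 2 / n) ^ 2 * (4 * (op ^ 2 * S / q)) ≤ 4 * (op ^ 2 / S) := by
    have e : (κ ^ 2 / n) ^ 2 * (4 * (op ^ 2 * S / q)) = (4 * (op ^ 2 / S)) * (q / (n:ℝ) ^ 2) := by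
      rw [hκ]
      field_simp
    rw [e]
    refine mul_le_of_le_one_right (by positivity) ?_
    rw [div_le_one (by positivity), hqdef]
    linarith
  have hk2 : (κ ^ 2 / n) ^ 2 * (4 * (op ^ 2 * (S / q))) ≤ 4 * (op ^ 2 / S) := by
    rw [← mul_div_assoc (op ^ 2)]; exact hk
  have hr : (1 / (n:ℝ) ^ 2) ^ 2 ≤ op ^ 2 / S := by
    have h1 : 1 / (n:ℝ) ≤ op ^ 2 / S := by
      rw [div_le_div_iff₀ (by positivity) hS0]; linarith
    refine le_trans ?_ h1
    rw [one_div, one_div, ← inv_pow, ← pow_mul]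
    have h2 : (n:ℝ)⁻¹ ≤ 1 := inv_le_one_of_one_le₀ (by linarith)
    exact pow_le_of_le_one (by positivity) h2 (by norm_num)
  have hc0 : 0 ≤ (κ ^ 2 / n) ^ 2 := sq_nonneg _
  have h1 := mul_le_mul_of_nonneg_left ha hc0
  have h2 := mul_le_mul_of_nonneg_left hb hc0
  nlinarith


lemma abs_le_opNormR {n : ℕ} (v : Fin n → ℝ) (i : Fin n) :
    |v i| ≤ opNormR (Matrix.diagonal v) := by
  have h := (Matrix.toEuclideanCLM (𝕜 := ℝ) (Matrix.diagonal v)).le_opNorm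
    (EuclideanSpace.single i (1:ℝ))
  rw [EuclideanSpace.norm_single, norm_one, mul_one] at h
  refine le_trans ?_ h
  have h2 := PiLp.norm_apply_le
    (Matrix.toEuclideanCLM (𝕜 := ℝ) (Matrix.diagonal v) (EuclideanSpace.single i (1:ℝ))) i
  refine le_trans (le_of_eq ?_) h2
  rw [← Real.norm_eq_abs]
  congr 1
  rw [Matrix.ofLp_toEuclideanCLM]
  simp [Matrix.mulVec_diagonal]

lemma unitary_row {n : ℕ} (U : Matrix (Fin n) (Fin n) ℂ)
    (hU : U ∈ Matrix.unitaryGroup (Fin n) ℂ) (r : Fin n) : ∑ k, ‖U r k‖ ^ 2 = 1 := by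
  have h := congrFun (congrFun (Matrix.mem_unitaryGroup_iff.1 hU) r) r
  rw [Matrix.mul_apply, Matrix.one_apply_eq] at h
  have h2 : ∀ k, U r k * (star U) k r = ((‖U r k‖ ^ 2 : ℝ) : ℂ) := by
    intro k
    rw [Matrix.star_apply, Complex.star_def, Complex.mul_conj, Complex.normSq_eq_norm_sq]
  simp only [h2] at h
  exact_mod_cast h

lemma entry_bound {n : ℕ} (U : Matrix (Fin n) (Fin n) ℂ)
    (hU : U ∈ Matrix.unitaryGroup (Fin n) ℂ) (v : Fin n → ℝ) (op : ℝ) (hv : ∀ k, |v k| ≤ op)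
    (r s : Fin n) :
    ‖(U * Matrix.diagonal (fun k => (v k : ℂ)) * Uᴴ) r s‖ ≤ op := by
  have h0 : 0 ≤ op := (abs_nonneg _).trans (hv r)
  rw [Matrix.mul_apply]
  calc _ ≤ ∑ k, ‖(U * Matrix.diagonal (fun k => (v k : ℂ))) r k * Uᴴ k s‖ := norm_sum_le _ _
    _ ≤ ∑ k, op * ((‖U r k‖ ^ 2 + ‖U s k‖ ^ 2) / 2) := by
        refine Finset.sum_le_sum fun k _ => ?_
        rw [Matrix.mul_diagonal, Matrix.conjTranspose_apply, norm_mul, norm_mul, norm_star,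
          Complex.norm_real, Real.norm_eq_abs]
        have h1 := hv k
        have h2 : ‖U r k‖ * ‖U s k‖ ≤ (‖U r k‖ ^ 2 + ‖U s k‖ ^ 2) / 2 := by
          nlinarith [sq_nonneg (‖U r k‖ - ‖U s k‖)]
        calc ‖U r k‖ * |v k| * ‖U s k‖ = |v k| * (‖U r k‖ * ‖U s k‖) := by ring
          _ ≤ _ := mul_le_mul h1 h2 (by positivity) h0
    _ = op := by
        rw [← Finset.mul_sum, ← Finset.sum_div, Finset.sum_add_distrib, unitary_row U hU,
          unitary_row U hU]
        norm_num

lemma main_diag {n d : ℕ} (hd : 0 < d) (v : Fin n → ℝ) (hv0 : v ≠ 0) (htr : ∑ i, v i = 0)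
    {Ω : Type*} [MeasurableSpace Ω] (P : Measure Ω) [IsProbabilityMeasure P]
    (U : Ω → Matrix (Fin n) (Fin n) ℂ) (hUmeas : Measurable U)
    (hUmem : ∀ ω, U ω ∈ Matrix.unitaryGroup (Fin n) ℂ)
    (hUhaar : ∀ V ∈ Matrix.unitaryGroup (Fin n) ℂ,
      Measure.map (fun ω => V * U ω) P = Measure.map U P)
    (φ : Fin d → EntryLabel n) (hφ : Function.Injective φ)
    (f : (Fin d → ℝ) → ℝ)
    (hf : ∀ x y : Fin d → ℝ, |f x - f y| ≤ Real.sqrt (∑ i, (x i - y i) ^ 2))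
    (op : ℝ) (hop : ∀ k, |v k| ≤ op) (S : ℝ) (hSv : S = ∑ k, v k ^ 2)
    (κ : ℝ) (hκ : κ ^ 2 = ((n:ℝ) ^ 2 - 1) / S) :
    |(∫ ω, f (fun i => κ *
            entryValue (U ω * Matrix.diagonal (fun k => (v k : ℂ)) * (U ω)ᴴ) (φ i)) ∂P) -
        ∫ x, f x ∂(Measure.pi fun _ : Fin d => gaussianReal 0 1)| ≤
      9 * d * Real.sqrt n * (op ^ 2 / S) := by
  obtain ⟨k0, hk0⟩ := Function.ne_iff.1 hv0
  simp only [Pi.zero_apply] at hk0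
  have hn0 : 0 < n := k0.pos
  have hn : 2 ≤ n := by
    by_contra hlt
    have h1 : n = 1 := by omega
    subst h1
    rw [Fin.sum_univ_one] at htr
    apply hk0
    rw [Subsingleton.elim k0 0, htr]
  have hS0 : 0 < S := by
    rw [hSv]
    exact Finset.sum_pos' (fun k _ => sq_nonneg _) ⟨k0, Finset.mem_univ _, by positivity⟩
  have hop0 : 0 < op := lt_of_lt_of_le (abs_pos.2 hk0) (hop k0)
  have hsq : ∀ k, v k ^ 2 ≤ op ^ 2 := fun k => sq_le_sq' (by linarith [(abs_le.1 (hop k)).1])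
    (abs_le.1 (hop k)).2
  have hnR : (0:ℝ) < n := by exact_mod_cast hn0
  have hSop : S ≤ n * op ^ 2 := by
    rw [hSv]
    refine (Finset.sum_le_sum fun k _ => hsq k).trans ?_
    simp
  set D : Matrix (Fin n) (Fin n) ℂ := Matrix.diagonal (fun k => (v k : ℂ)) with hDdef
  have hD : Dᴴ = D := by
    rw [hDdef, Matrix.diagonal_conjTranspose]
    congr 1
    funext k
    simp
  have hDtr : D.trace = 0 := by
    rw [hDdef, Matrix.trace_diagonal]
    exact_mod_cast htr
  have hDD : D * D = Matrix.diagonal (fun k => ((v k ^ 2 : ℝ) : ℂ)) := by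
    rw [hDdef, Matrix.diagonal_mul_diagonal]
    congr 1
    funext k
    push_cast
    ring
  have hStr : (D * D).trace = S := by
    rw [hDD, Matrix.trace_diagonal, hSv]
    push_cast
    rfl
  have hopE : ∀ ω r s, ‖(U ω * D * (U ω)ᴴ) r s‖ ≤ op := fun ω r s =>
    entry_bound (U ω) (hUmem ω) v op hop r s
  have hD2 : D * D - ((S / n : ℝ) : ℂ) • 1 = Matrix.diagonal (fun k => ((v k ^ 2 - S / n : ℝ) : ℂ)) := by
    rw [hDD, Matrix.smul_one_eq_diagonal, Matrix.diagonal_sub]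
    congr 1
    funext k
    simp
  have hS4 : ((D * D - ((S / n : ℝ) : ℂ) • 1) * (D * D - ((S / n : ℝ) : ℂ) • 1)).trace =
      ((∑ k, (v k ^ 2 - S / n) ^ 2 : ℝ) : ℂ) := by
    rw [hD2, Matrix.diagonal_mul_diagonal, Matrix.trace_diagonal]
    push_cast
    refine Finset.sum_congr rfl fun k _ => by ring
  have hS4le : ∑ k, (v k ^ 2 - S / n) ^ 2 ≤ op ^ 2 * S := by
    have e : ∀ k, (v k ^ 2 - S / n) ^ 2 = v k ^ 2 * v k ^ 2 - 2 * (S / n) * v k ^ 2 + (S / n) ^ 2 :=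
      fun k => by ring
    simp only [e, Finset.sum_add_distrib, Finset.sum_sub_distrib, ← Finset.mul_sum, ← hSv]
    simp only [Finset.sum_const, Finset.card_univ, Fintype.card_fin, nsmul_eq_mul]
    have e2 : ∑ k, v k ^ 2 * v k ^ 2 ≤ op ^ 2 * S := by
      rw [hSv, Finset.mul_sum]
      exact Finset.sum_le_sum fun k _ => mul_le_mul_of_nonneg_right (hsq k) (sq_nonneg _)
    have e3 : (n:ℝ) * (S / n) ^ 2 = S / n * S := by field_simp
    have e4 : 0 ≤ S / n * S := by positivity
    rw [e3]
    linarith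
  have hvar := fun i j => stein_var P U hUmeas hUmem hUhaar D hD hDtr hn S hStr hS0 op hopE hSop
    _ hS4 (Finset.sum_nonneg fun k _ => sq_nonneg _) hS4le κ hκ φ hφ i j
  -- bounds for the bounded random variables
  have hbd : ∀ g : Matrix (Fin n) (Fin n) ℂ → ℝ, Continuous g →
      ∃ R : ℝ, ∀ ω, |g (U ω * D * (U ω)ᴴ)| ≤ R := by
    intro g hg
    obtain ⟨R, hR⟩ := bounded_on_unitary (fun M => ((g (M * D * Mᴴ) : ℝ) : ℂ))
      (Complex.continuous_ofReal.comp (hg.comp (by fun_prop)))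
    refine ⟨R, fun ω => ?_⟩
    have := hR _ (hUmem ω)
    rwa [Complex.norm_real, Real.norm_eq_abs] at this
  have hyc : ∀ i, Continuous fun A : Matrix (Fin n) (Fin n) ℂ => κ * entryValue A (φ i) :=
    fun i => (entryValue_cont (φ i)).const_mul _
  choose R1 hR1 using fun i => hbd _ (hyc i)
  choose R2 hR2 using fun i j => hbd _ (steinT_cont κ φ i j)
  set R := ∑ i, |R1 i| + ∑ i, ∑ j, |R2 i j| with hR
  have hA1 : ∀ i, |R1 i| ≤ R := fun i => by
    have h1 := Finset.single_le_sum (f := fun i => |R1 i|) (fun i _ => abs_nonneg _)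
      (Finset.mem_univ i)
    have h2 : 0 ≤ ∑ i, ∑ j, |R2 i j| :=
      Finset.sum_nonneg fun i _ => Finset.sum_nonneg fun j _ => abs_nonneg _
    linarith
  have hA2 : ∀ i j, |R2 i j| ≤ R := fun i j => by
    have h1 := Finset.single_le_sum (f := fun i => ∑ j, |R2 i j|)
      (fun i _ => Finset.sum_nonneg fun j _ => abs_nonneg _) (Finset.mem_univ i)
    have h3 := Finset.single_le_sum (f := fun j => |R2 i j|) (fun i _ => abs_nonneg _)
      (Finset.mem_univ j)
    have h2 : 0 ≤ ∑ i, |R1 i| := Finset.sum_nonneg fun i _ => abs_nonneg _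
    linarith
  have hAm : Measurable (fun ω => U ω * D * (U ω)ᴴ) := by
    have : Continuous (fun M : Matrix (Fin n) (Fin n) ℂ => M * D * Mᴴ) := by fun_prop
    exact this.measurable.comp hUmeas
  set r := op ^ 2 / S with hrdef
  have hr0 : 0 < r := by positivity
  have hr1 : 1 ≤ n * r := by
    rw [hrdef, mul_div_assoc', le_div_iff₀ hS0]; linarith
  have hdR : (0:ℝ) < d := by exact_mod_cast hd
  have hsn : Real.sqrt n ^ 2 = n := Real.sq_sqrt hnR.le
  have hsn0 : 0 < Real.sqrt n := Real.sqrt_pos.2 hnR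
  have hvi : ∀ i j, Integrable (fun ω =>
      (steinT κ φ (U ω * D * (U ω)ᴴ) i j - if i = j then 1 else 0) ^ 2) P := fun i j =>
    integrable_unitary_real P U hUmeas hUmem D
      (fun A => (steinT κ φ A i j - if i = j then 1 else 0) ^ 2)
      (((steinT_cont κ φ i j).sub continuous_const).pow 2)
  have hKT : ∫ ω, ∑ i, ∑ j, (steinT κ φ (U ω * D * (U ω)ᴴ) i j - if i = j then 1 else 0) ^ 2 ∂P ≤
      (5.2 * d * Real.sqrt n * r) ^ 2 := by
    rw [integral_finsetSum _ fun i _ => integrable_finsetSum _ fun j _ => hvi i j]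
    calc _ ≤ ∑ i : Fin d, ∑ j : Fin d, 27 * r := by
          refine Finset.sum_le_sum fun i _ => ?_
          rw [integral_finsetSum _ fun j _ => hvi i j]
          exact Finset.sum_le_sum fun j _ => hvar i j
      _ = 27 * (d:ℝ) ^ 2 * r := by
          simp
          ring
      _ ≤ 27 * (d:ℝ) ^ 2 * (r * (n * r)) := by
          refine mul_le_mul_of_nonneg_left ?_ (by positivity)
          exact le_mul_of_one_le_right hr0.le hr1
      _ ≤ (5.2 * d * Real.sqrt n * r) ^ 2 := by
          have : (5.2 * d * Real.sqrt n * r) ^ 2 = 27.04 * (d:ℝ) ^ 2 * (r * (n * r)) := by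
            rw [mul_pow, mul_pow, hsn]; ring
          rw [this]
          have h0 : 0 ≤ (d:ℝ) ^ 2 * (r * (n * r)) := by positivity
          nlinarith
  have hmain := stein_abstract P
    (fun ω i => κ * entryValue (U ω * D * (U ω)ᴴ) (φ i))
    (measurable_pi_lambda _ fun i => (hyc i).measurable.comp hAm) R
    (fun ω i => ((hR1 i ω).trans (le_abs_self _)).trans (hA1 i))
    (fun ω => steinT κ φ (U ω * D * (U ω)ᴴ))
    (fun i j => (steinT_cont κ φ i j).measurable.comp hAm)
    (fun ω i j => ((hR2 i j ω).trans (le_abs_self _)).trans (hA2 i j))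
    (fun u hu i => stein_identity P U hUmeas hUmem hUhaar D hD hDtr hn0.ne' κ φ u hu i)
    (5.2 * d * Real.sqrt n * r) (by positivity) hKT f hf
  refine hmain.trans ?_
  have hpi : Real.pi ≤ 3.15 := Real.pi_lt_d2.le
  have h0 : 0 ≤ d * Real.sqrt n * r := by positivity
  nlinarith

theorem stmt7 {n d : ℕ}
    (Λ : Matrix (Fin n) (Fin n) ℝ) (hdiag : Λ.IsDiag) (hΛne : Λ ≠ 0)
    (hΛtr : Λ.trace = 0)
    {Ω : Type*} [MeasurableSpace Ω] (P : Measure Ω) [IsProbabilityMeasure P]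
    -- U is Haar distributed on the unitary group:
    (U : Ω → Matrix (Fin n) (Fin n) ℂ) (hUmeas : Measurable U)
    (hUmem : ∀ ω, U ω ∈ Matrix.unitaryGroup (Fin n) ℂ)
    (hUhaar : ∀ V ∈ Matrix.unitaryGroup (Fin n) ℂ,
      Measure.map (fun ω => V * U ω) P = Measure.map U P)
    -- the coordinates of X are distinct choices among the entry functionals:
    (φ : Fin d → EntryLabel n) (hφ : Function.Injective φ)
    -- W₁ bound, in dual (1-Lipschitz test function) form:
    (f : (Fin d → ℝ) → ℝ)
    (hf : ∀ x y : Fin d → ℝ, |f x - f y| ≤ Real.sqrt (∑ i, (x i - y i) ^ 2)) :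
    |(∫ ω, f (fun i =>
          (Real.sqrt ((n : ℝ) ^ 2 - 1) / hsNormR Λ) *
            entryValue (U ω * Λ.map (fun x => (x : ℂ)) * (U ω)ᴴ) (φ i)) ∂P) -
        ∫ x, f x ∂(Measure.pi fun _ : Fin d => gaussianReal 0 1)| ≤
      9 * d * Real.sqrt n * ((opNormR Λ) ^ 2 / (hsNormR Λ) ^ 2) := by
  rcases Nat.eq_zero_or_pos d with hd | hd
  · subst hd
    have hc : ∀ x : Fin 0 → ℝ, f x = f 0 := fun x => by rw [Subsingleton.elim x 0]
    simp only [hc]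
    simp
  set v : Fin n → ℝ := fun i => Λ i i with hv
  have hΛ : Λ = Matrix.diagonal v := by
    ext i j
    by_cases hij : i = j
    · subst hij; simp [hv]
    · rw [hdiag hij, Matrix.diagonal_apply_ne _ hij]
  have hv0 : v ≠ 0 := by
    intro h
    apply hΛne
    rw [hΛ, h]
    simp
  have hmap : Λ.map (fun x => (x : ℂ)) = Matrix.diagonal (fun k => (v k : ℂ)) := by
    rw [hΛ, Matrix.diagonal_map (by simp)]
  have hS : hsNormR Λ ^ 2 = ∑ k, v k ^ 2 := by
    have e : (Λ * Λᵀ).trace = ∑ k, v k ^ 2 := by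
      rw [hΛ, Matrix.diagonal_transpose, Matrix.diagonal_mul_diagonal, Matrix.trace_diagonal]
      simp only [sq]
    rw [hsNormR, e, Real.sq_sqrt (Finset.sum_nonneg fun k _ => sq_nonneg _)]
  have hn1 : (1:ℝ) ≤ n := by
    obtain ⟨k0, _⟩ := Function.ne_iff.1 hv0
    exact_mod_cast k0.pos
  have hκ : (Real.sqrt ((n : ℝ) ^ 2 - 1) / hsNormR Λ) ^ 2 = ((n:ℝ) ^ 2 - 1) / hsNormR Λ ^ 2 := by
    rw [div_pow, Real.sq_sqrt (by nlinarith)]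
  have hop : ∀ k, |v k| ≤ opNormR Λ := fun k => by
    rw [hΛ]
    exact abs_le_opNormR v k
  rw [hmap]
  exact main_diag hd v hv0 hΛtr P U hUmeas hUmem hUhaar φ hφ f hf (opNormR Λ) hop _ hS _ hκ
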